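/- arXiv:1911.08186 — 8 statements merged into one kernel-verified Lean document; each statement's English description precedes it below -/
import Mathlib

section
/- For every real C ≥ 1, every θ with 0 ≤ θ ≤ π, and all ℓ, ℓ' ≥ 0, one has D_θ(C·ℓ, C·ℓ') ≥ C · D_θ(ℓ, ℓ'). -/
/-- Inverse hyperbolic cosine. -/
noncomputable def arcosh (x : ℝ) : ℝ := Real.log (x + Real.sqrt (x ^ 2 - 1))

/-- `D θ ℓ ℓ'` is the distance, in the hyperbolic plane of curvature `-1`, between the far
endpoints of two geodesic segments of lengths `ℓ, ℓ'` issuing from a common vertex at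
angle `θ`. -/
noncomputable def D (θ ℓ ℓ' : ℝ) : ℝ :=
  arcosh (Real.cosh ℓ * Real.cosh ℓ' - Real.sinh ℓ * Real.sinh ℓ' * Real.cos θ)

theorem aux_num (C : ℝ) (hC : 1 ≤ C) (t : ℝ) (ht : 0 ≤ t) :
    0 ≤ C * Real.cosh (C * t) * Real.sinh t - Real.sinh (C * t) * Real.cosh t := by
  have hd : ∀ x : ℝ, HasDerivAt
      (fun t => C * Real.cosh (C * t) * Real.sinh t - Real.sinh (C * t) * Real.cosh t)
      ((C ^ 2 - 1) * (Real.sinh (C * x) * Real.sinh x)) x := by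
    intro x
    have h0 : HasDerivAt (fun t : ℝ => C * t) C x := by
      simpa using (hasDerivAt_id x).const_mul C
    have h := ((h0.cosh.const_mul C).mul (Real.hasDerivAt_sinh x)).sub
      (h0.sinh.mul (Real.hasDerivAt_cosh x))
    exact h.congr_deriv (by ring)
  have hm : MonotoneOn
      (fun t => C * Real.cosh (C * t) * Real.sinh t - Real.sinh (C * t) * Real.cosh t)
      (Set.Ici 0) := by
    apply monotoneOn_of_deriv_nonneg (convex_Ici 0)
    · exact fun x _ => (hd x).continuousAt.continuousWithinAt
    · exact fun x _ => (hd x).differentiableAt.differentiableWithinAt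
    · intro x hx
      rw [interior_Ici] at hx
      have hx0 : 0 ≤ x := le_of_lt hx
      rw [(hd x).deriv]
      have h1 : 0 ≤ Real.sinh (C * x) := Real.sinh_nonneg_iff.2 (by positivity)
      have h2 : 0 ≤ Real.sinh x := Real.sinh_nonneg_iff.2 hx0
      have h3 : 0 ≤ C ^ 2 - 1 := by nlinarith
      positivity
  have := hm (Set.mem_Ici.2 le_rfl) (Set.mem_Ici.2 ht) ht
  simpa using this

theorem aux_ratio (C : ℝ) (hC : 1 ≤ C) :
    MonotoneOn (fun t => Real.sinh (C * t) / Real.sinh t) (Set.Ioi 0) := by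
  have hd : ∀ x : ℝ, 0 < x → HasDerivAt (fun t => Real.sinh (C * t) / Real.sinh t)
      ((C * Real.cosh (C * x) * Real.sinh x - Real.sinh (C * x) * Real.cosh x)
        / Real.sinh x ^ 2) x := by
    intro x hx
    have h0 : HasDerivAt (fun t : ℝ => C * t) C x := by
      simpa using (hasDerivAt_id x).const_mul C
    have h := h0.sinh.div (Real.hasDerivAt_sinh x) (Real.sinh_pos_iff.2 hx).ne'
    exact h.congr_deriv (by ring)
  apply monotoneOn_of_deriv_nonneg (convex_Ioi 0)
  · exact fun x hx => (hd x hx).continuousAt.continuousWithinAt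
  · intro x hx
    rw [interior_Ioi] at hx
    exact (hd x hx).differentiableAt.differentiableWithinAt
  · intro x hx
    rw [interior_Ioi] at hx
    rw [(hd x hx).deriv]
    exact div_nonneg (aux_num C hC x (le_of_lt hx)) (sq_nonneg _)

theorem aux_convex (C : ℝ) (hC : 1 ≤ C) :
    ConvexOn ℝ (Set.Ici 1) (fun x => Real.cosh (C * Real.arcosh x)) := by
  have hd : ∀ x : ℝ, 1 < x → HasDerivAt (fun x => Real.cosh (C * Real.arcosh x))
      (C * (Real.sinh (C * Real.arcosh x) / Real.sinh (Real.arcosh x))) x := by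
    intro x hx
    have h := ((Real.hasDerivAt_arcosh (x := x) hx).const_mul C).cosh
    convert h using 1
    rw [Real.sinh_arcosh hx.le]
    ring
  apply MonotoneOn.convexOn_of_deriv (convex_Ici 1)
  · exact Real.continuous_cosh.comp_continuousOn
      (continuousOn_const.mul Real.continuousOn_arcosh)
  · intro x hx
    rw [interior_Ici] at hx
    exact (hd x hx).differentiableAt.differentiableWithinAt
  · rw [interior_Ici]
    intro x hx y hy hxy
    rw [(hd x hx).deriv, (hd y hy).deriv]
    have hx' : (1 : ℝ) < x := hx
    have hy' : (1 : ℝ) < y := hy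
    apply mul_le_mul_of_nonneg_left _ (by linarith)
    exact aux_ratio C hC (Real.arcosh_pos hx') (Real.arcosh_pos hy')
      ((Real.arcosh_le_arcosh (by linarith) (by linarith)).2 hxy)

theorem aux_arcosh_cosh (C u : ℝ) (hC : 1 ≤ C) :
    Real.cosh (C * Real.arcosh (Real.cosh u)) = Real.cosh (C * u) := by
  rw [← Real.cosh_abs u, Real.arcosh_cosh (abs_nonneg u), ← Real.cosh_abs (C * u), abs_mul,
    abs_of_nonneg (by linarith : (0 : ℝ) ≤ C)]

theorem aux_split (θ a b : ℝ) :
    Real.cosh a * Real.cosh b - Real.sinh a * Real.sinh b * Real.cos θ =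
      (1 + Real.cos θ) / 2 * Real.cosh (a - b) + (1 - Real.cos θ) / 2 * Real.cosh (a + b) := by
  rw [Real.cosh_sub, Real.cosh_add]
  ring

theorem stmt_2 (C θ ℓ ℓ' : ℝ) (hC : 1 ≤ C) (hθ0 : 0 ≤ θ) (hθπ : θ ≤ Real.pi)
    (hℓ : 0 ≤ ℓ) (hℓ' : 0 ≤ ℓ') :
    C * D θ ℓ ℓ' ≤ D θ (C * ℓ) (C * ℓ') := by
  have hp : 0 ≤ (1 + Real.cos θ) / 2 := by linarith [Real.neg_one_le_cos θ]
  have hq : 0 ≤ (1 - Real.cos θ) / 2 := by linarith [Real.cos_le_one θ]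
  have hge : ∀ u v : ℝ, 1 ≤ (1 + Real.cos θ) / 2 * Real.cosh u
      + (1 - Real.cos θ) / 2 * Real.cosh v := by
    intro u v
    nlinarith [mul_le_mul_of_nonneg_left (Real.one_le_cosh u) hp,
      mul_le_mul_of_nonneg_left (Real.one_le_cosh v) hq]
  have key := (aux_convex C hC).2 (Set.mem_Ici.2 (Real.one_le_cosh (ℓ - ℓ')))
    (Set.mem_Ici.2 (Real.one_le_cosh (ℓ + ℓ'))) hp hq (by ring)
  simp only [smul_eq_mul, aux_arcosh_cosh C _ hC] at key
  change C * Real.arcosh _ ≤ Real.arcosh _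
  rw [aux_split, aux_split, ← mul_sub, ← mul_add]
  have h0 := Real.arcosh_nonneg (hge (ℓ - ℓ') (ℓ + ℓ'))
  rw [← Real.arcosh_cosh (mul_nonneg (by linarith : (0 : ℝ) ≤ C) h0)]
  exact (Real.arcosh_le_arcosh (Real.cosh_pos _)
    (lt_of_lt_of_le one_pos (hge _ _))).2 key
end

section
/- Let r > 0, let c be a real with 0 < c ≤ 1, let θ satisfy 0 ≤ θ ≤ π, and let ℓ, ℓ' be reals with 0 ≤ ℓ ≤ r and 0 ≤ ℓ' ≤ r. Then D_θ(c·ℓ, c·ℓ') ≥ (sinh(c·r)/sinh(r)) · D_θ(ℓ, ℓ'). -/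
open Real in
lemma sinh_mul_le_aux (k : ℝ) (hk0 : 0 ≤ k) (hk1 : k ≤ 1) (x : ℝ) (hx : 0 ≤ x) :
    sinh (k * x) ≤ k * sinh x := by
  have hd : ∀ y : ℝ, HasDerivAt (fun y => k * sinh y - sinh (k * y))
      (k * cosh y - cosh (k * y) * (k * 1)) y := fun y =>
    ((hasDerivAt_sinh y).const_mul k).sub (((hasDerivAt_id y).const_mul k).sinh)
  have hm : MonotoneOn (fun y => k * sinh y - sinh (k * y)) (Set.Ici 0) := by
    apply monotoneOn_of_deriv_nonneg (convex_Ici 0)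
    · exact fun y _ => (hd y).continuousAt.continuousWithinAt
    · exact fun y _ => (hd y).differentiableAt.differentiableWithinAt
    · intro y hy
      rw [interior_Ici] at hy
      have hy : 0 < y := hy
      rw [(hd y).deriv]
      have : cosh (k * y) ≤ cosh y := by
        rw [cosh_le_cosh, abs_of_nonneg (by positivity), abs_of_nonneg hy.le]
        nlinarith
      nlinarith
  have := hm (Set.mem_Ici.2 le_rfl) (Set.mem_Ici.2 hx) hx
  simp at this
  linarith

open Real in
lemma coth_aux (c : ℝ) (hc0 : 0 < c) (hc1 : c ≤ 1) (x : ℝ) (hx : 0 ≤ x) :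
    c * cosh (c * x) * sinh x ≤ sinh (c * x) * cosh x := by
  have hd : ∀ y : ℝ, HasDerivAt (fun y => sinh (c * y) * cosh y - c * cosh (c * y) * sinh y)
      ((1 - c ^ 2) * (sinh (c * y) * sinh y)) y := fun y => by
    have h1 := ((hasDerivAt_id y).const_mul c).sinh
    have h2 := ((hasDerivAt_id y).const_mul c).cosh
    have := (h1.mul (hasDerivAt_cosh y)).sub ((h2.const_mul c).mul (hasDerivAt_sinh y))
    refine this.congr_deriv ?_
    simp only [id]
    ring
  have hm : MonotoneOn (fun y => sinh (c * y) * cosh y - c * cosh (c * y) * sinh y)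
      (Set.Ici 0) := by
    apply monotoneOn_of_deriv_nonneg (convex_Ici 0)
    · exact fun y _ => (hd y).continuousAt.continuousWithinAt
    · exact fun y _ => (hd y).differentiableAt.differentiableWithinAt
    · intro y hy
      rw [interior_Ici] at hy
      have hy : 0 < y := hy
      rw [(hd y).deriv]
      have h1 : 0 < sinh y := sinh_pos_iff.2 hy
      have h2 : 0 < sinh (c * y) := sinh_pos_iff.2 (by positivity)
      have h3 : 0 ≤ 1 - c ^ 2 := by nlinarith
      positivity
  have := hm (Set.mem_Ici.2 le_rfl) (Set.mem_Ici.2 hx) hx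
  simp at this
  linarith

open Real in
lemma ratio_aux (c : ℝ) (hc0 : 0 < c) (hc1 : c ≤ 1) (x r : ℝ) (hx : 0 ≤ x) (hr : 0 < r)
    (hxr : x ≤ r) : sinh (c * r) / sinh r * sinh x ≤ sinh (c * x) := by
  rcases hx.eq_or_lt with rfl | hx
  · simp
  have hd : ∀ y : ℝ, 0 < y → HasDerivAt (fun y => sinh (c * y) / sinh y)
      ((cosh (c * y) * (c * 1) * sinh y - sinh (c * y) * cosh y) / sinh y ^ 2) y := fun y hy =>
    (((hasDerivAt_id y).const_mul c).sinh).div (hasDerivAt_sinh y) (sinh_pos_iff.2 hy).ne'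
  have hm : AntitoneOn (fun y => sinh (c * y) / sinh y) (Set.Ioi 0) := by
    apply antitoneOn_of_deriv_nonpos (convex_Ioi 0)
    · exact fun y hy => (hd y hy).continuousAt.continuousWithinAt
    · intro y hy
      rw [interior_Ioi] at hy
      exact (hd y hy).differentiableAt.differentiableWithinAt
    · intro y hy
      rw [interior_Ioi] at hy
      rw [(hd y hy).deriv]
      apply div_nonpos_of_nonpos_of_nonneg _ (sq_nonneg _)
      have := coth_aux c hc0 hc1 y (le_of_lt hy)
      linarith
  have h := hm (Set.mem_Ioi.2 hx) (Set.mem_Ioi.2 hr) hxr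
  exact (le_div_iff₀ (sinh_pos_iff.2 hx)).1 h

open Real in
lemma law_aux (θ a b : ℝ) : cosh a * cosh b - sinh a * sinh b * cos θ
    = 1 + 2 * (sinh ((a - b) / 2) ^ 2 + sinh a * sinh b * sin (θ / 2) ^ 2) := by
  have h1 : cosh (a - b) = 1 + 2 * sinh ((a - b) / 2) ^ 2 := by
    have := cosh_two_mul ((a - b) / 2)
    rw [cosh_sq, mul_div_cancel₀ _ (two_ne_zero)] at this
    linarith
  have h2 : cos θ = 1 - 2 * sin (θ / 2) ^ 2 := by
    have := cos_two_mul (θ / 2)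
    rw [cos_sq', mul_div_cancel₀ _ (two_ne_zero)] at this
    linarith
  rw [cosh_sub] at h1
  rw [h2]
  linarith

open Real in
lemma D_aux (θ a b : ℝ) (ha : 0 ≤ a) (hb : 0 ≤ b) : 0 ≤ D θ a b ∧
    sinh (D θ a b / 2) ^ 2 = sinh ((a - b) / 2) ^ 2 + sinh a * sinh b * sin (θ / 2) ^ 2 := by
  have hl := law_aux θ a b
  have ha' := sinh_nonneg_iff.2 ha
  have hb' := sinh_nonneg_iff.2 hb
  have h1 : 1 ≤ cosh a * cosh b - sinh a * sinh b * cos θ := by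
    rw [hl]
    have : 0 ≤ sinh ((a - b) / 2) ^ 2 + sinh a * sinh b * sin (θ / 2) ^ 2 := by positivity
    linarith
  have hD : D θ a b = Real.arcosh (cosh a * cosh b - sinh a * sinh b * cos θ) := rfl
  refine ⟨hD ▸ Real.arcosh_nonneg h1, ?_⟩
  have h2 : cosh (D θ a b) = _ := hD ▸ Real.cosh_arcosh h1
  have := cosh_two_mul (D θ a b / 2)
  rw [cosh_sq, mul_div_cancel₀ _ (two_ne_zero)] at this
  linarith

theorem stmt_4 (r c θ ℓ ℓ' : ℝ) (hr : 0 < r) (hc0 : 0 < c) (hc1 : c ≤ 1)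
    (hθ0 : 0 ≤ θ) (hθπ : θ ≤ Real.pi)
    (hℓ0 : 0 ≤ ℓ) (hℓr : ℓ ≤ r) (hℓ'0 : 0 ≤ ℓ') (hℓ'r : ℓ' ≤ r) :
    Real.sinh (c * r) / Real.sinh r * D θ ℓ ℓ' ≤ D θ (c * ℓ) (c * ℓ') := by
  obtain ⟨hd, hd2⟩ := D_aux θ ℓ ℓ' hℓ0 hℓ'0
  obtain ⟨he, he2⟩ := D_aux θ (c * ℓ) (c * ℓ') (by positivity) (by positivity)
  have hR := ratio_aux c hc0 hc1 ℓ r hℓ0 hr hℓr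
  have hR' := ratio_aux c hc0 hc1 ℓ' r hℓ'0 hr hℓ'r
  have hA := ratio_aux c hc0 hc1 (|ℓ - ℓ'| / 2) r (by positivity) hr (by
    have : |ℓ - ℓ'| ≤ r := abs_le.2 ⟨by linarith, by linarith⟩
    linarith)
  have hsr : 0 < Real.sinh r := Real.sinh_pos_iff.2 hr
  have hscr : 0 < Real.sinh (c * r) := Real.sinh_pos_iff.2 (by positivity)
  have hk1 : Real.sinh (c * r) / Real.sinh r ≤ 1 := by
    rw [div_le_one hsr, Real.sinh_le_sinh]
    nlinarith
  have hk0 : 0 < Real.sinh (c * r) / Real.sinh r := by positivity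
  generalize Real.sinh (c * r) / Real.sinh r = k at *
  have hs := Real.sinh_nonneg_iff.2 hℓ0
  have hs' := Real.sinh_nonneg_iff.2 hℓ'0
  have hsa : 0 ≤ Real.sinh (|ℓ - ℓ'| / 2) := Real.sinh_nonneg_iff.2 (by positivity)
  have hA2 : k ^ 2 * Real.sinh ((ℓ - ℓ') / 2) ^ 2 ≤ Real.sinh ((c * ℓ - c * ℓ') / 2) ^ 2 := by
    have h := pow_le_pow_left₀ (by positivity) hA 2
    rw [mul_pow] at h
    rcases abs_choice (ℓ - ℓ') with h' | h' <;> rw [h'] at h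
    · rwa [show c * ((ℓ - ℓ') / 2) = (c * ℓ - c * ℓ') / 2 by ring] at h
    · rwa [show c * (-(ℓ - ℓ') / 2) = -((c * ℓ - c * ℓ') / 2) by ring, neg_div,
        Real.sinh_neg, Real.sinh_neg, neg_sq, neg_sq] at h
  have hB : (k * Real.sinh ℓ) * (k * Real.sinh ℓ') ≤ Real.sinh (c * ℓ) * Real.sinh (c * ℓ') :=
    mul_le_mul hR hR' (by positivity) (le_trans (by positivity) hR)
  have hB2 := mul_le_mul_of_nonneg_right hB (sq_nonneg (Real.sin (θ / 2)))
  have hC := sinh_mul_le_aux k hk0.le hk1 (D θ ℓ ℓ' / 2) (by positivity)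
  have hfin : (k * Real.sinh (D θ ℓ ℓ' / 2)) ^ 2 ≤ Real.sinh (D θ (c * ℓ) (c * ℓ') / 2) ^ 2 := by
    rw [mul_pow, hd2, he2]
    linarith
  have h1 := abs_le_of_sq_le_sq hfin (Real.sinh_nonneg_iff.2 (by positivity))
  have h2 := Real.sinh_le_sinh.1 (hC.trans ((le_abs_self _).trans h1))
  linarith
end

section
/- The function ℓ ↦ D_{2π/3}(ℓ, ℓ) = arcosh(cosh²ℓ + (1/2)·sinh²ℓ) is strictly convex on [0, ∞). -/
theorem stmt5_formula (l : ℝ) : D (2 * Real.pi / 3) l l =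
      arcosh (Real.cosh l ^ 2 + (1 / 2) * Real.sinh l ^ 2) := by
  have h : Real.cos (2 * Real.pi / 3) = -(1 / 2) := by
    rw [show 2 * Real.pi / 3 = Real.pi - Real.pi / 3 by ring, Real.cos_pi_sub, Real.cos_pi_div_three]
  unfold D
  rw [h]
  congr 1
  ring

theorem stmt5_eq : (fun l : ℝ => D (2 * Real.pi / 3) l l) =
      fun l => Real.arcosh (1 + (3 / 2) * Real.sinh l ^ 2) := by
  funext l
  rw [stmt5_formula, Real.cosh_sq]
  change Real.arcosh _ = _
  congr 1
  ring

theorem stmt5_deriv {l : ℝ} (hl : 0 < l) :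
    deriv (fun l => Real.arcosh (1 + (3 / 2) * Real.sinh l ^ 2)) l =
      √(9 * (1 + Real.sinh l ^ 2) / (3 + 9 / 4 * Real.sinh l ^ 2)) := by
  have hs : 0 < Real.sinh l := Real.sinh_pos_iff.2 hl
  have hc := Real.cosh_pos l
  have h1 : HasDerivAt (fun l => 1 + (3 / 2) * Real.sinh l ^ 2)
      (3 * Real.sinh l * Real.cosh l) l := by
    have := (((Real.hasDerivAt_sinh l).pow 2).const_mul (3 / 2 : ℝ)).const_add 1
    refine HasDerivAt.congr_deriv this ?_
    push_cast
    ring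
  have h2 := Real.hasDerivAt_arcosh (x := 1 + (3 / 2) * Real.sinh l ^ 2)
    (by simp only [Set.mem_Ioi]; nlinarith [pow_pos hs 2])
  have h3 := (h2.comp l h1).deriv
  refine Eq.trans h3 ?_
  have e : (1 + (3 / 2) * Real.sinh l ^ 2) ^ 2 - 1 =
      Real.sinh l ^ 2 * (3 + 9 / 4 * Real.sinh l ^ 2) := by ring
  have e2 : 9 * (1 + Real.sinh l ^ 2) = (3 * Real.cosh l) ^ 2 := by
    rw [mul_pow, Real.cosh_sq]; ring
  rw [e, e2, Real.sqrt_mul (by positivity), Real.sqrt_sq hs.le, Real.sqrt_div (by positivity),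
    Real.sqrt_sq (by positivity)]
  have : 0 < √(3 + 9 / 4 * Real.sinh l ^ 2) := Real.sqrt_pos.2 (by positivity)
  field_simp

theorem stmt_5 :
    (∀ ℓ : ℝ, D (2 * Real.pi / 3) ℓ ℓ =
      arcosh (Real.cosh ℓ ^ 2 + (1 / 2) * Real.sinh ℓ ^ 2)) ∧
    StrictConvexOn ℝ (Set.Ici (0 : ℝ)) (fun ℓ : ℝ => D (2 * Real.pi / 3) ℓ ℓ) := by
  refine ⟨stmt5_formula, ?_⟩
  rw [stmt5_eq]
  refine StrictMonoOn.strictConvexOn_of_deriv (convex_Ici 0) ?_ ?_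
  · refine ContinuousOn.comp (g := Real.arcosh)
      (f := fun l => 1 + (3 / 2) * Real.sinh l ^ 2) Real.continuousOn_arcosh ?_ ?_
    · have := Real.continuous_sinh
      fun_prop
    · intro x _
      simp only [Set.mem_Ici]
      nlinarith [sq_nonneg (Real.sinh x)]
  · rw [interior_Ici]
    intro a ha b hb hab
    rw [stmt5_deriv ha, stmt5_deriv hb]
    have hs : 0 < Real.sinh a := Real.sinh_pos_iff.2 ha
    have hlt : Real.sinh a ^ 2 < Real.sinh b ^ 2 :=
      pow_lt_pow_left₀ (Real.sinh_lt_sinh.2 hab) hs.le two_ne_zero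
    apply Real.sqrt_lt_sqrt (by positivity)
    rw [div_lt_div_iff₀ (by positivity) (by positivity)]
    nlinarith
end

section
/- Let ℍ be the hyperbolic plane, let C ≥ 1 be a real number, let X' be a subset of ℍ, and let f : X' → ℍ be a C-Lipschitz map. Then there exists a C-Lipschitz map F : ℍ → ℍ with F(x) = f(x) for all x ∈ X'. -/
open scoped UpperHalfPlane

theorem aux_mono (C : ℝ) (hC : 1 ≤ C) (x y : ℝ) (hx : 0 < x) (hxy : x ≤ y) :
    Real.sinh (C * x) * Real.sinh y ≤ Real.sinh (C * y) * Real.sinh x := by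
  have hh : ∀ t : ℝ, 0 ≤ t →
      0 ≤ C * Real.cosh (C * t) * Real.sinh t - Real.sinh (C * t) * Real.cosh t := by
    have hd : ∀ t : ℝ, HasDerivAt
        (fun t => C * Real.cosh (C * t) * Real.sinh t - Real.sinh (C * t) * Real.cosh t)
        ((C ^ 2 - 1) * (Real.sinh (C * t) * Real.sinh t)) t := by
      intro t
      have h1 : HasDerivAt (fun t : ℝ => C * t) C t := by
        simpa using (hasDerivAt_id t).const_mul C
      have h2 := ((h1.cosh.const_mul C).mul (Real.hasDerivAt_sinh t)).sub
        (h1.sinh.mul (Real.hasDerivAt_cosh t))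
      refine h2.congr_deriv ?_
      ring
    have hm : MonotoneOn
        (fun t => C * Real.cosh (C * t) * Real.sinh t - Real.sinh (C * t) * Real.cosh t)
        (Set.Ici 0) := by
      apply monotoneOn_of_deriv_nonneg (convex_Ici 0)
      · exact fun t _ => (hd t).continuousAt.continuousWithinAt
      · exact fun t _ => (hd t).differentiableAt.differentiableWithinAt
      · intro t ht
        rw [interior_Ici] at ht
        have ht0 : 0 < t := ht
        rw [(hd t).deriv]
        have h1 : 0 ≤ Real.sinh (C * t) := Real.sinh_nonneg_iff.2 (by positivity)
        have h2 : 0 ≤ Real.sinh t := Real.sinh_nonneg_iff.2 ht0.le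
        have h3 : 0 ≤ C ^ 2 - 1 := by nlinarith
        positivity
    intro t ht
    have := hm (Set.mem_Ici.2 le_rfl) (Set.mem_Ici.2 ht) ht
    simpa using this
  have hd : ∀ t : ℝ, 0 < t → HasDerivAt
      (fun t => Real.sinh (C * t) / Real.sinh t)
      ((C * Real.cosh (C * t) * Real.sinh t - Real.sinh (C * t) * Real.cosh t)
        / Real.sinh t ^ 2) t := by
    intro t ht
    have h1 : HasDerivAt (fun t : ℝ => C * t) C t := by
      simpa using (hasDerivAt_id t).const_mul C
    have h2 := h1.sinh.div (Real.hasDerivAt_sinh t) (Real.sinh_pos_iff.2 ht).ne'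
    refine h2.congr_deriv ?_
    ring
  have hm : MonotoneOn (fun t => Real.sinh (C * t) / Real.sinh t) (Set.Ioi 0) := by
    apply monotoneOn_of_deriv_nonneg (convex_Ioi 0)
    · exact fun t ht => (hd t ht).continuousAt.continuousWithinAt
    · intro t ht
      rw [interior_Ioi] at ht
      exact (hd t ht).differentiableAt.differentiableWithinAt
    · intro t ht
      rw [interior_Ioi] at ht
      rw [(hd t ht).deriv]
      exact div_nonneg (hh t (le_of_lt ht)) (sq_nonneg _)
  have := hm (Set.mem_Ioi.2 hx) (Set.mem_Ioi.2 (hx.trans_le hxy)) hxy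
  simp only at this
  rwa [div_le_div_iff₀ (Real.sinh_pos_iff.2 hx) (Real.sinh_pos_iff.2 (hx.trans_le hxy))] at this

/-- tangent line inequality for `cosh (C * arcosh u)`. -/
theorem aux_tangent (C : ℝ) (hC : 1 ≤ C) (c x : ℝ) (hc : 0 < c) (hx : 0 ≤ x) :
    C * Real.sinh (C * c) * (Real.cosh x - Real.cosh c)
      ≤ Real.sinh c * (Real.cosh (C * x) - Real.cosh (C * c)) := by
  have hd : ∀ t : ℝ, HasDerivAt
      (fun t => Real.sinh c * Real.cosh (C * t) - C * Real.sinh (C * c) * Real.cosh t)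
      (C * (Real.sinh (C * t) * Real.sinh c - Real.sinh (C * c) * Real.sinh t)) t := by
    intro t
    have h1 : HasDerivAt (fun t : ℝ => C * t) C t := by
      simpa using (hasDerivAt_id t).const_mul C
    have h2 := (h1.cosh.const_mul (Real.sinh c)).sub
      ((Real.hasDerivAt_cosh t).const_mul (C * Real.sinh (C * c)))
    refine h2.congr_deriv ?_
    ring
  have hC0 : 0 ≤ C := by linarith
  rcases le_total c x with h | h
  · have hm : MonotoneOn
        (fun t => Real.sinh c * Real.cosh (C * t) - C * Real.sinh (C * c) * Real.cosh t)
        (Set.Ici c) := by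
      apply monotoneOn_of_deriv_nonneg (convex_Ici c)
      · exact fun t _ => (hd t).continuousAt.continuousWithinAt
      · exact fun t _ => (hd t).differentiableAt.differentiableWithinAt
      · intro t ht
        rw [interior_Ici] at ht
        rw [(hd t).deriv]
        have := aux_mono C hC c t hc (le_of_lt ht)
        exact mul_nonneg hC0 (by linarith)
    have := hm (Set.mem_Ici.2 le_rfl) (Set.mem_Ici.2 h) h
    simp only at this
    linarith
  · have hm : AntitoneOn
        (fun t => Real.sinh c * Real.cosh (C * t) - C * Real.sinh (C * c) * Real.cosh t)
        (Set.Icc 0 c) := by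
      apply antitoneOn_of_deriv_nonpos (convex_Icc 0 c)
      · exact fun t _ => (hd t).continuousAt.continuousWithinAt
      · exact fun t _ => (hd t).differentiableAt.differentiableWithinAt
      · intro t ht
        rw [interior_Icc] at ht
        rw [(hd t).deriv]
        have := aux_mono C hC t c ht.1 (le_of_lt ht.2)
        exact mul_nonpos_of_nonneg_of_nonpos hC0 (by linarith)
    have := hm ⟨hx, h⟩ ⟨hc.le, le_rfl⟩ h
    simp only at this
    linarith

/-- Scaling of hyperbolic triangles. -/
theorem aux_compare (C : ℝ) (hC : 1 ≤ C) (a b c : ℝ) (ha : 0 < a) (hb : 0 < b) (hc : 0 ≤ c)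
    (h1 : |a - b| ≤ c) (h2 : c ≤ a + b) :
    Real.sinh (C * a) * Real.sinh (C * b) *
      ((Real.cosh a * Real.cosh b - Real.cosh c) / (Real.sinh a * Real.sinh b))
      ≤ Real.cosh (C * a) * Real.cosh (C * b) - Real.cosh (C * c) := by
  have hsa := Real.sinh_pos_iff.2 ha
  have hsb := Real.sinh_pos_iff.2 hb
  obtain ⟨τ, hτ⟩ : ∃ τ, τ = (Real.cosh a * Real.cosh b - Real.cosh c) /
    (Real.sinh a * Real.sinh b) := ⟨_, rfl⟩
  rw [← hτ]
  have hcc : Real.cosh c = Real.cosh a * Real.cosh b - Real.sinh a * Real.sinh b * τ := by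
    rw [hτ]; field_simp; ring
  have e1 : Real.cosh (a - b) ≤ Real.cosh c := by
    rw [Real.cosh_le_cosh, abs_of_nonneg hc]; exact h1
  have e2 : Real.cosh c ≤ Real.cosh (a + b) := by
    rw [Real.cosh_le_cosh, abs_of_nonneg hc, abs_of_pos (by linarith)]; exact h2
  have hp : 0 < Real.sinh a * Real.sinh b := by positivity
  have f1 : τ ≤ 1 := by
    rw [Real.cosh_sub] at e1; by_contra hh; push Not at hh; nlinarith
  have f2 : -1 ≤ τ := by
    rw [Real.cosh_add] at e2; by_contra hh; push Not at hh; nlinarith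
  have key : Real.cosh (C * c) ≤
      (1 + τ) / 2 * Real.cosh (C * |a - b|) + (1 - τ) / 2 * Real.cosh (C * (a + b)) := by
    rcases hc.eq_or_lt with rfl | hc
    · have g1 := Real.one_le_cosh (C * |a - b|)
      have g2 := Real.one_le_cosh (C * (a + b))
      simp only [mul_zero, Real.cosh_zero]
      nlinarith
    · have g1 := aux_tangent C hC c |a - b| hc (abs_nonneg _)
      have g2 := aux_tangent C hC c (a + b) hc (by positivity)
      have hs := Real.sinh_pos_iff.2 hc
      have hcomb : (1 + τ) / 2 * Real.cosh |a - b| + (1 - τ) / 2 * Real.cosh (a + b)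
          = Real.cosh c := by
        rw [Real.cosh_abs, Real.cosh_sub, Real.cosh_add, hcc]; ring
      have g3 := mul_le_mul_of_nonneg_left g1 (show 0 ≤ (1 + τ) / 2 by linarith)
      have g4 := mul_le_mul_of_nonneg_left g2 (show 0 ≤ (1 - τ) / 2 by linarith)
      have g5 : 0 ≤ Real.sinh c * (((1 + τ) / 2 * Real.cosh (C * |a - b|)
          + (1 - τ) / 2 * Real.cosh (C * (a + b))) - Real.cosh (C * c)) := by
        have : C * Real.sinh (C * c) * (((1 + τ) / 2 * Real.cosh |a - b|
          + (1 - τ) / 2 * Real.cosh (a + b)) - Real.cosh c) = 0 := by rw [hcomb]; ring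
        linarith
      have := nonneg_of_mul_nonneg_right g5 hs
      linarith
  have e3 : Real.cosh (C * |a - b|) = Real.cosh (C * a - C * b) := by
    rw [← Real.cosh_abs (C * a - C * b), ← mul_sub, abs_mul, abs_of_nonneg (by linarith : 0 ≤ C)]
  rw [e3, mul_add, Real.cosh_sub, Real.cosh_add] at key
  linarith

theorem aux_dual {ι : Type*} [Fintype ι] [Nonempty ι] (P Q m : ι → ℝ)
    (h : ∀ w ∈ stdSimplex ℝ ι, ∑ i, w i * m i ≤ (∑ i, w i * P i) ^ 2 + (∑ i, w i * Q i) ^ 2) :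
    ∃ u v : ℝ, ∀ i, u ^ 2 + v ^ 2 - 2 * u * P i - 2 * v * Q i + m i ≤ 0 := by
  classical
  obtain ⟨w, hw, hmax⟩ := (isCompact_stdSimplex ℝ ι).exists_isMaxOn
    ⟨_, single_mem_stdSimplex ℝ (Classical.arbitrary ι)⟩
    (f := fun w : ι → ℝ => ∑ i, w i * m i - ((∑ i, w i * P i) ^ 2 + (∑ i, w i * Q i) ^ 2))
    (by fun_prop)
  obtain ⟨u, hu⟩ : ∃ u, u = ∑ i, w i * P i := ⟨_, rfl⟩
  obtain ⟨v, hv⟩ : ∃ v, v = ∑ i, w i * Q i := ⟨_, rfl⟩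
  obtain ⟨n, hn⟩ : ∃ n, n = ∑ i, w i * m i := ⟨_, rfl⟩
  refine ⟨u, v, fun i => ?_⟩
  have h0 := h w hw
  rw [← hu, ← hv, ← hn] at h0
  have step : ∀ t : ℝ, 0 < t → t ≤ 1 →
      (m i - n) - 2 * (u * (P i - u) + v * (Q i - v)) ≤ t * ((P i - u) ^ 2 + (Q i - v) ^ 2) := by
    intro t ht ht1
    have hmem : (1 - t) • w + t • Pi.single i (1 : ℝ) ∈ stdSimplex ℝ ι :=
      convex_stdSimplex ℝ ι hw (single_mem_stdSimplex ℝ i) (by linarith) ht.le (by ring)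
    have hs : ∀ g : ι → ℝ, ∑ j, ((1 - t) • w + t • Pi.single i (1 : ℝ) : ι → ℝ) j * g j
        = (1 - t) * ∑ j, w j * g j + t * g i := by
      intro g
      simp only [Pi.add_apply, Pi.smul_apply, smul_eq_mul, add_mul, Finset.sum_add_distrib,
        Finset.mul_sum, mul_assoc]
      congr 1
      rw [Finset.sum_eq_single i]
      · simp
      · intro j _ hj; simp [hj]
      · simp
    have := hmax hmem
    simp only [Set.mem_ofPred_eq, hs, ← hu, ← hv, ← hn] at this
    have h3 : 0 ≤ t * (t * ((P i - u) ^ 2 + (Q i - v) ^ 2) -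
        ((m i - n) - 2 * (u * (P i - u) + v * (Q i - v)))) := by linarith
    have := nonneg_of_mul_nonneg_right h3 ht
    linarith
  have lim : (m i - n) - 2 * (u * (P i - u) + v * (Q i - v)) ≤ 0 := by
    by_contra hh
    push Not at hh
    obtain ⟨A, hA⟩ : ∃ A, A = (m i - n) - 2 * (u * (P i - u) + v * (Q i - v)) := ⟨_, rfl⟩
    obtain ⟨B, hB⟩ : ∃ B, B = (P i - u) ^ 2 + (Q i - v) ^ 2 := ⟨_, rfl⟩
    rw [← hA, ← hB] at step
    rw [← hA] at hh
    have hB0 : 0 ≤ B := by rw [hB]; positivity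
    have := step (A / (A + B + A)) (by positivity) (by
      rw [div_le_one (by positivity)]; linarith)
    rw [div_mul_eq_mul_div, le_div_iff₀ (by positivity)] at this
    nlinarith
  linarith

theorem aux_cosh (z w : ℍ) : 2 * z.im * w.im * Real.cosh (dist z w)
    = (z.re - w.re) ^ 2 + z.im ^ 2 + w.im ^ 2 := by
  rw [UpperHalfPlane.cosh_dist']
  have := z.im_pos
  have := w.im_pos
  field_simp

theorem aux_finite (C : ℝ) (hC : 1 ≤ C) {ι : Type*} [Fintype ι] [Nonempty ι] (X Y : ι → ℍ)
    (hXY : ∀ i j, dist (Y i) (Y j) ≤ C * dist (X i) (X j)) (x : ℍ) (hx : ∀ i, x ≠ X i) :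
    ∃ y : ℍ, ∀ i, dist y (Y i) ≤ C * dist x (X i) := by
  have hC0 : 0 ≤ C := by linarith
  have ha : ∀ i, 0 < dist x (X i) := fun i => dist_pos.2 (hx i)
  let κ : ι → ℝ := fun i => Real.cosh (C * dist x (X i))
  obtain ⟨u, v, huv⟩ := aux_dual (fun i => (Y i).re) (fun i => κ i * (Y i).im)
    (fun i => (Y i).re ^ 2 + (Y i).im ^ 2) (by
      intro w hw
      -- tangent vectors at `x`
      let p : ι → ℝ := fun i => ((X i).re - x.re) / (X i).im / Real.sinh (dist x (X i))
      let q : ι → ℝ := fun i => (Real.cosh (dist x (X i)) * (X i).im - x.im) / (X i).im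
        / Real.sinh (dist x (X i))
      let s : ι → ℝ := fun i => Real.sinh (C * dist x (X i))
      have hpq : ∀ i j, p i * p j + q i * q j =
          (Real.cosh (dist x (X i)) * Real.cosh (dist x (X j)) - Real.cosh (dist (X i) (X j)))
          / (Real.sinh (dist x (X i)) * Real.sinh (dist x (X j))) := by
        intro i j
        have h1 := aux_cosh x (X i)
        have h2 := aux_cosh x (X j)
        have h3 := aux_cosh (X i) (X j)
        have hi := (X i).im_pos
        have hj := (X j).im_pos
        have hsi := Real.sinh_pos_iff.2 (ha i)
        have hsj := Real.sinh_pos_iff.2 (ha j)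
        simp only [p, q]
        field_simp
        linarith
      have hij : ∀ i j, s i * s j * (p i * p j + q i * q j)
          ≤ κ i * κ j - Real.cosh (dist (Y i) (Y j)) := by
        intro i j
        rw [hpq]
        have h1 := aux_compare C hC (dist x (X i)) (dist x (X j)) (dist (X i) (X j))
          (ha i) (ha j) dist_nonneg
          (by rw [dist_comm x, dist_comm x]; exact abs_dist_sub_le _ _ _)
          (by rw [dist_comm x]; exact dist_triangle _ _ _)
        have h2 : Real.cosh (dist (Y i) (Y j)) ≤ Real.cosh (C * dist (X i) (X j)) := by
          rw [Real.cosh_le_cosh, abs_of_nonneg dist_nonneg,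
            abs_of_nonneg (mul_nonneg hC0 dist_nonneg)]
          exact hXY i j
        simp only [s, κ]
        linarith
      have hsum : (∑ i, w i * (Y i).re) ^ 2 + (∑ i, w i * (κ i * (Y i).im)) ^ 2
          - ∑ i, w i * ((Y i).re ^ 2 + (Y i).im ^ 2)
          = ∑ i, ∑ j, (w i * (Y i).im) * (w j * (Y j).im) *
            (κ i * κ j - Real.cosh (dist (Y i) (Y j))) := by
        have e1 : ∑ i, w i * ((Y i).re ^ 2 + (Y i).im ^ 2) = ∑ i, ∑ j, w i * w j *
            (((Y i).re ^ 2 + (Y i).im ^ 2) / 2 + ((Y j).re ^ 2 + (Y j).im ^ 2) / 2) := by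
          have g1 : ∑ i, ∑ j, w i * w j * (((Y i).re ^ 2 + (Y i).im ^ 2) / 2)
              = (∑ i, w i * ((Y i).re ^ 2 + (Y i).im ^ 2)) / 2 := by
            rw [Finset.sum_div]
            refine Finset.sum_congr rfl fun i _ => ?_
            rw [← Finset.sum_mul, ← Finset.mul_sum, hw.2]; ring
          have g2 : ∑ i, ∑ j, w i * w j * (((Y j).re ^ 2 + (Y j).im ^ 2) / 2)
              = (∑ i, w i * ((Y i).re ^ 2 + (Y i).im ^ 2)) / 2 := by
            rw [Finset.sum_comm, ← g1]
            refine Finset.sum_congr rfl fun i _ => Finset.sum_congr rfl fun j _ => ?_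
            ring
          simp only [mul_add (w _ * w _), Finset.sum_add_distrib]
          rw [g1, g2]; ring
        rw [e1, sq, sq, Finset.sum_mul_sum, Finset.sum_mul_sum, ← Finset.sum_add_distrib,
          ← Finset.sum_sub_distrib]
        refine Finset.sum_congr rfl fun i _ => ?_
        rw [← Finset.sum_add_distrib, ← Finset.sum_sub_distrib]
        refine Finset.sum_congr rfl fun j _ => ?_
        have h3 := aux_cosh (Y i) (Y j)
        linear_combination ((w i * w j) / 2) * h3
      have hge : ∑ i, ∑ j, (w i * (Y i).im) * (w j * (Y j).im) *
            (s i * s j * (p i * p j + q i * q j)) ≤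
          ∑ i, ∑ j, (w i * (Y i).im) * (w j * (Y j).im) *
            (κ i * κ j - Real.cosh (dist (Y i) (Y j))) := by
        refine Finset.sum_le_sum fun i _ => Finset.sum_le_sum fun j _ => ?_
        exact mul_le_mul_of_nonneg_left (hij i j)
          (mul_nonneg (mul_nonneg (hw.1 i) (Y i).im_pos.le) (mul_nonneg (hw.1 j) (Y j).im_pos.le))
      have hsq : ∑ i, ∑ j, (w i * (Y i).im) * (w j * (Y j).im) *
            (s i * s j * (p i * p j + q i * q j)) =
          (∑ i, w i * (Y i).im * s i * p i) ^ 2 + (∑ i, w i * (Y i).im * s i * q i) ^ 2 := by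
        rw [sq, sq, Finset.sum_mul_sum, Finset.sum_mul_sum, ← Finset.sum_add_distrib]
        refine Finset.sum_congr rfl fun i _ => ?_
        rw [← Finset.sum_add_distrib]
        refine Finset.sum_congr rfl fun j _ => ?_
        ring
      have h5 := sq_nonneg (∑ i, w i * (Y i).im * s i * p i)
      have h6 := sq_nonneg (∑ i, w i * (Y i).im * s i * q i)
      linarith)
  have hv : 0 < v := by
    obtain ⟨i⟩ := ‹Nonempty ι›
    have h1 := huv i
    have h2 := (Y i).im_pos
    have h3 : 0 < κ i := Real.cosh_pos _
    have h4 : 0 < κ i * (Y i).im := by positivity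
    by_contra hh
    push Not at hh
    nlinarith [sq_nonneg (u - (Y i).re), sq_nonneg v, mul_nonneg (neg_nonneg.2 hh) h4.le]
  refine ⟨⟨⟨u, v⟩, hv⟩, fun i => ?_⟩
  have h1 := aux_cosh ⟨⟨u, v⟩, hv⟩ (Y i)
  have hre : (⟨⟨u, v⟩, hv⟩ : ℍ).re = u := rfl
  have him : (⟨⟨u, v⟩, hv⟩ : ℍ).im = v := rfl
  rw [hre, him] at h1
  have h2 := huv i
  have h3 := (Y i).im_pos
  have h4 : Real.cosh (dist (⟨⟨u, v⟩, hv⟩ : ℍ) (Y i)) ≤ κ i := by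
    have : 0 < 2 * v * (Y i).im := by positivity
    refine le_of_mul_le_mul_left ?_ this
    linarith
  simp only [κ] at h4
  rwa [Real.cosh_le_cosh, abs_of_nonneg dist_nonneg,
    abs_of_nonneg (mul_nonneg hC0 dist_nonneg)] at h4

theorem aux_point (C : ℝ) (hC : 1 ≤ C) (G : Set (ℍ × ℍ))
    (hG : ∀ p ∈ G, ∀ q ∈ G, dist p.2 q.2 ≤ C * dist p.1 q.1) (x : ℍ) :
    ∃ y : ℍ, ∀ q ∈ G, dist y q.2 ≤ C * dist x q.1 := by
  classical
  by_cases hx : ∃ q ∈ G, x = q.1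
  · obtain ⟨q, hq, rfl⟩ := hx
    exact ⟨q.2, fun r hr => hG q hq r hr⟩
  push Not at hx
  rcases G.eq_empty_or_nonempty with rfl | ⟨q₀, hq₀⟩
  · exact ⟨x, by simp⟩
  have := IsCompact.inter_iInter_nonempty
    (isCompact_closedBall q₀.2 (C * dist x q₀.1))
    (fun q : G => Metric.closedBall q.1.2 (C * dist x q.1.1))
    (fun q => Metric.isClosed_closedBall) (by
      intro S
      have hne : Nonempty (insert (⟨q₀, hq₀⟩ : G) S : Finset G) :=
        ⟨⟨_, Finset.mem_insert_self _ _⟩⟩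
      obtain ⟨y, hy⟩ := aux_finite C hC
        (fun i : (insert (⟨q₀, hq₀⟩ : G) S : Finset G) => i.1.1.1) (fun i => i.1.1.2)
        (fun i j => hG _ i.1.2 _ j.1.2) x (fun i => hx _ i.1.2)
      refine ⟨y, hy ⟨_, Finset.mem_insert_self _ _⟩, ?_⟩
      simp only [Set.mem_iInter]
      intro i hi
      exact hy ⟨i, Finset.mem_insert_of_mem hi⟩)
  obtain ⟨y, _, hy⟩ := this
  simp only [Set.mem_iInter] at hy
  exact ⟨y, fun q hq => hy ⟨q, hq⟩⟩

theorem stmt_10 (C : ℝ) (hC : 1 ≤ C) (X' : Set ℍ) (f : X' → ℍ)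
    (hf : ∀ x y : X', dist (f x) (f y) ≤ C * dist (x : ℍ) (y : ℍ)) :
    ∃ F : ℍ → ℍ, (∀ x y : ℍ, dist (F x) (F y) ≤ C * dist x y) ∧ ∀ x : X', F x = f x := by
  obtain ⟨G, hG0, hmax⟩ := zorn_subset_nonempty
    {G : Set (ℍ × ℍ) | ∀ p ∈ G, ∀ q ∈ G, dist p.2 q.2 ≤ C * dist p.1 q.1}
    (by
      intro c hc hchain _
      refine ⟨⋃₀ c, ?_, fun s hs => Set.subset_sUnion_of_mem hs⟩
      rintro p ⟨s, hs, hps⟩ q ⟨t, ht, hqt⟩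
      rcases hchain.total hs ht with h | h
      · exact hc ht p (h hps) q hqt
      · exact hc hs p hps q (h hqt))
    (Set.range fun x : X' => ((x : ℍ), f x))
    (by
      rintro _ ⟨x, rfl⟩ _ ⟨y, rfl⟩
      exact hf x y)
  have hG := hmax.prop
  have hex : ∀ x : ℍ, ∃ y : ℍ, (x, y) ∈ G := by
    intro x
    obtain ⟨y, hy⟩ := aux_point C hC G hG x
    refine ⟨y, ?_⟩
    have hins : insert (x, y) G ∈
        {G : Set (ℍ × ℍ) | ∀ p ∈ G, ∀ q ∈ G, dist p.2 q.2 ≤ C * dist p.1 q.1} := by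
      rintro p (rfl | hp) q (rfl | hq)
      · simp
      · exact hy q hq
      · rw [dist_comm, dist_comm p.1]; exact hy p hp
      · exact hG p hp q hq
    exact hmax.le_of_ge hins (Set.subset_insert _ _) (Set.mem_insert _ _)
  choose F hF using hex
  refine ⟨F, fun x y => hG _ (hF x) _ (hF y), fun x => ?_⟩
  have := hG _ (hF x) _ (hG0 ⟨x, rfl⟩)
  simp only [dist_self, mul_zero] at this
  exact dist_le_zero.1 this
end

section
/- Let ℍ be the hyperbolic plane, let C ≥ 1 be a real number, let X' be a nonempty subset of ℍ, let f : X' → ℍ be a C-Lipschitz map, and let ξ ∈ ℍ. Then there exists a point η ∈ ℍ such that d(η, f(x)) ≤ C·d(ξ, x) for all x ∈ X'; in other words, f extends to a C-Lipschitz map on X' ∪ {ξ} sending ξ to η. -/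
open scoped UpperHalfPlane
open Real

theorem hyp_p_nonneg (l : ℝ) (hl : 1 ≤ l) (t : ℝ) (ht : 0 ≤ t) :
    0 ≤ l * cosh (l * t) * sinh t - sinh (l * t) * cosh t := by
  have hm : MonotoneOn (fun t => l * cosh (l * t) * sinh t - sinh (l * t) * cosh t)
      (Set.Ici (0:ℝ)) := by
    have hd : ∀ x : ℝ, HasDerivAt (fun t => l * cosh (l * t) * sinh t - sinh (l * t) * cosh t)
        ((l ^ 2 - 1) * (sinh (l * x) * sinh x)) x := by
      intro x
      have h0 : HasDerivAt (fun t : ℝ => l * t) l x := by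
        simpa using (hasDerivAt_id x).const_mul l
      have h1 := ((h0.cosh.const_mul l).mul (hasDerivAt_sinh x)).sub
        (h0.sinh.mul (hasDerivAt_cosh x))
      exact h1.congr_deriv (by ring)
    apply monotoneOn_of_deriv_nonneg (convex_Ici 0)
    · exact fun x _ => (hd x).continuousAt.continuousWithinAt
    · exact fun x _ => (hd x).differentiableAt.differentiableWithinAt
    · intro x hx
      rw [interior_Ici] at hx
      rw [(hd x).deriv]
      have hx' : 0 < x := hx
      have : 0 ≤ sinh x := sinh_nonneg_iff.2 hx'.le
      have : 0 ≤ sinh (l * x) := sinh_nonneg_iff.2 (by positivity)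
      have : 0 ≤ l ^ 2 - 1 := by nlinarith
      positivity
  have := hm (Set.mem_Ici.2 le_rfl) (Set.mem_Ici.2 ht) ht
  simpa using this

theorem hyp_ratio (l : ℝ) (hl : 1 ≤ l) :
    MonotoneOn (fun t => sinh (l * t) / sinh t) (Set.Ioi (0:ℝ)) := by
  have hd : ∀ x : ℝ, 0 < x → HasDerivAt (fun t => sinh (l * t) / sinh t)
      ((l * cosh (l * x) * sinh x - sinh (l * x) * cosh x) / sinh x ^ 2) x := by
    intro x hx
    have h0 : HasDerivAt (fun t : ℝ => l * t) l x := by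
      simpa using (hasDerivAt_id x).const_mul l
    have h1 := h0.sinh.div (hasDerivAt_sinh x) (sinh_pos_iff.2 hx).ne'
    exact h1.congr_deriv (by ring)
  apply monotoneOn_of_deriv_nonneg (convex_Ioi 0)
  · exact fun x hx => (hd x hx).continuousAt.continuousWithinAt
  · intro x hx
    rw [interior_Ioi] at hx
    exact (hd x hx).differentiableAt.differentiableWithinAt
  · intro x hx
    rw [interior_Ioi] at hx
    rw [(hd x hx).deriv]
    have := hyp_p_nonneg l hl x (le_of_lt hx)
    positivity

theorem hyp_tangent (l : ℝ) (hl : 1 ≤ l) (c : ℝ) (hc : 0 < c) (t : ℝ) (ht : 0 ≤ t) :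
    cosh (l * c) + l * (sinh (l * c) / sinh c) * (cosh t - cosh c) ≤ cosh (l * t) := by
  set k := sinh (l * c) / sinh c with hk
  have hd : ∀ x : ℝ, HasDerivAt (fun t => cosh (l * t) - l * k * cosh t)
      (l * (sinh (l * x) - k * sinh x)) x := by
    intro x
    have h0 : HasDerivAt (fun t : ℝ => l * t) l x := by
      simpa using (hasDerivAt_id x).const_mul l
    have h1 := h0.cosh.sub ((hasDerivAt_cosh x).const_mul (l * k))
    exact h1.congr_deriv (by ring)
  have key : cosh (l * c) - l * k * cosh c ≤ cosh (l * t) - l * k * cosh t := by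
    rcases le_total t c with h | h
    · have hm : AntitoneOn (fun t => cosh (l * t) - l * k * cosh t) (Set.Icc 0 c) := by
        apply antitoneOn_of_deriv_nonpos (convex_Icc 0 c)
        · exact fun x _ => (hd x).continuousAt.continuousWithinAt
        · exact fun x _ => (hd x).differentiableAt.differentiableWithinAt
        · intro x hx
          rw [interior_Icc] at hx
          rw [(hd x).deriv]
          have h1 : sinh (l * x) / sinh x ≤ k := hyp_ratio l hl hx.1 hc hx.2.le
          rw [div_le_iff₀ (sinh_pos_iff.2 hx.1)] at h1
          nlinarith
      exact hm ⟨ht, h⟩ ⟨hc.le, le_rfl⟩ h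
    · have hm : MonotoneOn (fun t => cosh (l * t) - l * k * cosh t) (Set.Ici c) := by
        apply monotoneOn_of_deriv_nonneg (convex_Ici c)
        · exact fun x _ => (hd x).continuousAt.continuousWithinAt
        · exact fun x _ => (hd x).differentiableAt.differentiableWithinAt
        · intro x hx
          rw [interior_Ici] at hx
          rw [(hd x).deriv]
          have hx' : c < x := hx
          have hx0 : 0 < x := hc.trans hx'
          have h1 : k ≤ sinh (l * x) / sinh x := hyp_ratio l hl hc hx0 hx'.le
          rw [le_div_iff₀ (sinh_pos_iff.2 hx0)] at h1
          nlinarith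
      exact hm (Set.mem_Ici.2 le_rfl) h h
  linarith

theorem hyp_compare (l : ℝ) (hl : 1 ≤ l) (a b c c' k k' : ℝ) (ha : 0 < a) (hb : 0 < b)
    (hc : 0 ≤ c) (hc' : 0 ≤ c') (hk1 : -1 ≤ k) (hk2 : k ≤ 1) (hkk : k' ≤ k)
    (h1 : cosh c = cosh a * cosh b - sinh a * sinh b * k)
    (h2 : cosh c' = cosh (l * a) * cosh (l * b) - sinh (l * a) * sinh (l * b) * k') :
    l * c ≤ c' := by
  rcases hc.eq_or_lt with h0 | h0
  · rw [← h0]; simpa using hc'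
  have hl0 : 0 < l := by linarith
  have hA : 0 < sinh (l * a) := sinh_pos_iff.2 (by positivity)
  have hB : 0 < sinh (l * b) := sinh_pos_iff.2 (by positivity)
  have t1 := hyp_tangent l hl c h0 (a + b) (by positivity)
  have t2 := hyp_tangent l hl c h0 |a - b| (abs_nonneg _)
  have e1 : cosh (l * |a - b|) = cosh (l * (a - b)) := by
    rw [← abs_of_pos hl0, ← abs_mul, cosh_abs, abs_of_pos hl0]
  rw [e1, cosh_abs, mul_sub l, cosh_sub, cosh_sub] at t2
  rw [mul_add l, cosh_add, cosh_add] at t1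
  set K := l * (sinh (l * c) / sinh c)
  have hfin : cosh (l * c) ≤ cosh c' := by
    have u1 := mul_le_mul_of_nonneg_left t1 (by linarith : 0 ≤ (1 - k) / 2)
    have u2 := mul_le_mul_of_nonneg_left t2 (by linarith : 0 ≤ (1 + k) / 2)
    have u3 : sinh (l * a) * sinh (l * b) * k' ≤ sinh (l * a) * sinh (l * b) * k :=
      mul_le_mul_of_nonneg_left hkk (by positivity)
    rw [h1] at u1 u2
    rw [h2]
    linarith
  have := cosh_le_cosh.1 hfin
  rwa [abs_of_nonneg hc', abs_of_nonneg (by positivity)] at this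

/-- Spatial hyperboloid coordinates of `w` with base point `z`. -/
noncomputable def hypG (z w : ℍ) : ℂ :=
  ⟨(w.re - z.re) / w.im, ((z.re - w.re) ^ 2 + w.im ^ 2 - z.im ^ 2) / (2 * z.im * w.im)⟩

theorem hyp_cosh (z w : ℍ) :
    cosh (dist z w) = ((z.re - w.re) ^ 2 + z.im ^ 2 + w.im ^ 2) / (2 * z.im * w.im) :=
  UpperHalfPlane.cosh_dist' z w

theorem hypG_sq (z w : ℍ) :
    (hypG z w).re ^ 2 + (hypG z w).im ^ 2 = sinh (dist z w) ^ 2 := by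
  rw [sinh_sq, hyp_cosh]
  have := z.im_ne_zero
  have := w.im_ne_zero
  simp only [hypG]
  field_simp
  ring

theorem hypG_cosh (z w v : ℍ) :
    cosh (dist w v) = cosh (dist z w) * cosh (dist z v)
      - ((hypG z w).re * (hypG z v).re + (hypG z w).im * (hypG z v).im) := by
  simp only [hyp_cosh]
  have := z.im_ne_zero
  have := w.im_ne_zero
  have := v.im_ne_zero
  simp only [hypG]
  field_simp
  ring

theorem hypG_surj (z : ℍ) (g : ℂ) :
    ∃ w : ℍ, hypG z w = g ∧ cosh (dist z w) = √(1 + (g.re ^ 2 + g.im ^ 2)) := by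
  set T := √(1 + (g.re ^ 2 + g.im ^ 2)) with hT
  have hT2 : T ^ 2 = 1 + (g.re ^ 2 + g.im ^ 2) := sq_sqrt (by positivity)
  have hT0 : 0 ≤ T := sqrt_nonneg _
  have hpos : 0 < T - g.im := by
    have : g.im < T := by
      apply lt_of_pow_lt_pow_left₀ 2 hT0
      nlinarith [sq_nonneg g.re]
    linarith
  have hz := z.im_pos
  have hq : 0 < z.im / (T - g.im) := by positivity
  set q := z.im / (T - g.im) with hqd
  have hqq : z.im = q * (T - g.im) := by rw [hqd]; field_simp
  let w : ℍ := ⟨⟨z.re + q * g.re, q⟩, hq⟩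
  have hre : w.re = z.re + q * g.re := rfl
  have him : w.im = q := rfl
  have hG : hypG z w = g := by
    apply Complex.ext
    · simp only [hypG, hre, him]
      field_simp
      ring
    · simp only [hypG, hre, him]
      rw [div_eq_iff (by positivity)]
      rw [hqq]
      linear_combination (-q^2) * hT2
  refine ⟨w, hG, ?_⟩
  have h := hypG_sq z w
  rw [hG, sinh_sq] at h
  rw [hT, h, add_sub_cancel, sqrt_sq (cosh_pos _).le]

/-- Moving from `z` decreases all distances with positive directional component. -/
theorem hyp_move (z : ℍ) {ι : Type*} [Finite ι] (f : ι → ℍ) (R : ι → ℝ)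
    (hle : ∀ i, dist z (f i) ≤ R i) (a b : ℝ)
    (h : ∀ i, dist z (f i) = R i → 0 < a * (hypG z (f i)).re + b * (hypG z (f i)).im) :
    ∃ w, ∀ i, dist w (f i) < R i := by
  choose W hW1 hW2 using fun ε : ℝ => hypG_surj z ⟨ε * a, ε * b⟩
  have hcosh : ∀ ε i, cosh (dist (W ε) (f i)) =
      √(1 + ((ε * a) ^ 2 + (ε * b) ^ 2)) * cosh (dist z (f i)) -
        ε * (a * (hypG z (f i)).re + b * (hypG z (f i)).im) := by
    intro ε i
    rw [hypG_cosh z, hW2, hW1]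
    ring
  have hev : ∀ i, ∀ᶠ ε in nhdsWithin (0:ℝ) (Set.Ioi 0), cosh (dist (W ε) (f i)) < cosh (R i) := by
    intro i
    have hR : 0 ≤ R i := dist_nonneg.trans (hle i)
    simp only [hcosh]
    rcases (hle i).eq_or_lt with h1 | h1
    · have hg := h i h1
      rw [h1]
      set g := a * (hypG z (f i)).re + b * (hypG z (f i)).im
      set c := cosh (R i)
      have hc : 0 < c := cosh_pos _
      have hcont : Filter.Tendsto (fun ε : ℝ => ε * ((a ^ 2 + b ^ 2) * c)) (nhdsWithin 0 (Set.Ioi 0))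
          (nhds 0) := by
        have : Continuous (fun ε : ℝ => ε * ((a ^ 2 + b ^ 2) * c)) := by fun_prop
        have := this.tendsto 0
        rw [zero_mul] at this
        exact this.mono_left nhdsWithin_le_nhds
      filter_upwards [hcont.eventually_lt_const (by positivity : 0 < 2 * g), self_mem_nhdsWithin]
        with ε h2 h3
      have h3' : 0 < ε := h3
      have hs : √(1 + ((ε * a) ^ 2 + (ε * b) ^ 2)) ≤ 1 + ((ε * a) ^ 2 + (ε * b) ^ 2) / 2 := by
        rw [sqrt_le_left (by positivity)]
        nlinarith [sq_nonneg ((ε * a) ^ 2 + (ε * b) ^ 2)]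
      have := mul_le_mul_of_nonneg_right hs hc.le
      have := mul_lt_mul_of_pos_left h2 h3'
      nlinarith
    · have hcont : Continuous (fun ε : ℝ => √(1 + ((ε * a) ^ 2 + (ε * b) ^ 2)) * cosh (dist z (f i)) -
        ε * (a * (hypG z (f i)).re + b * (hypG z (f i)).im)) := by fun_prop
      have ht := (hcont.tendsto 0).mono_left (nhdsWithin_le_nhds (s := Set.Ioi 0))
      refine ht.eventually_lt_const ?_
      simp only [zero_mul, ne_eq, OfNat.ofNat_ne_zero, not_false_eq_true, zero_pow, add_zero,
        sqrt_one, one_mul, sub_zero]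
      rw [cosh_lt_cosh, abs_of_nonneg dist_nonneg, abs_of_nonneg hR]
      exact h1
  obtain ⟨ε, hε⟩ := (Filter.eventually_all.2 hev).exists
  refine ⟨W ε, fun i => ?_⟩
  have := cosh_lt_cosh.1 (hε i)
  rwa [abs_of_nonneg dist_nonneg, abs_of_nonneg (dist_nonneg.trans (hle i))] at this

theorem hyp_finite (C : ℝ) (hC : 1 ≤ C) {ι : Type*} [Fintype ι] (x f : ι → ℍ)
    (hf : ∀ i j, dist (f i) (f j) ≤ C * dist (x i) (x j)) (ξ : ℍ) (hx : ∀ i, ξ ≠ x i) :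
    ∃ η : ℍ, ∀ i, dist η (f i) ≤ C * dist ξ (x i) := by
  rcases isEmpty_or_nonempty ι with he | hne
  · exact ⟨ξ, fun i => he.elim i⟩
  have hr : ∀ i, 0 < dist ξ (x i) := fun i => dist_pos.2 (hx i)
  let m : ℍ → ℝ := fun z => Finset.univ.sup' Finset.univ_nonempty
    (fun i => dist z (f i) / dist ξ (x i))
  have hmc : Continuous m := by
    apply Continuous.finset_sup'_apply
    intro i _
    fun_prop
  have hmt : Filter.Tendsto m (Filter.cocompact ℍ) Filter.atTop := by
    obtain ⟨i⟩ := hne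
    have h1 : Filter.Tendsto (fun z => dist z (f i) / dist ξ (x i)) (Filter.cocompact ℍ)
        Filter.atTop := (tendsto_dist_right_cocompact_atTop (f i)).atTop_div_const (hr i)
    refine Filter.tendsto_atTop_mono (fun z => ?_) h1
    exact Finset.le_sup' (fun i => dist z (f i) / dist ξ (x i)) (Finset.mem_univ i)
  have : Nonempty ℍ := ⟨ξ⟩
  obtain ⟨η, hη⟩ := hmc.exists_forall_le hmt
  set l := m η with hl
  have hle : ∀ i, dist η (f i) ≤ l * dist ξ (x i) := fun i => by
    rw [← div_le_iff₀ (hr i)]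
    exact Finset.le_sup' (fun i => dist η (f i) / dist ξ (x i)) (Finset.mem_univ i)
  by_cases hlC : l ≤ C
  · exact ⟨η, fun i => (hle i).trans (mul_le_mul_of_nonneg_right hlC (hr i).le)⟩
  exfalso
  push Not at hlC
  have hl1 : 1 ≤ l := by linarith
  have hl0 : 0 < l := by linarith
  have hnomove : ¬ ∃ w, ∀ i, dist w (f i) < l * dist ξ (x i) := by
    rintro ⟨w, hw⟩
    refine absurd (hη w) (not_le.2 ?_)
    rw [Finset.sup'_lt_iff]
    intro i _
    rw [div_lt_iff₀ (hr i)]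
    exact hw i
  -- directions
  let U : ι → ℂ := fun i => (sinh (dist η (f i)))⁻¹ • hypG η (f i)
  let V : ι → ℂ := fun i => (sinh (dist ξ (x i)))⁻¹ • hypG ξ (x i)
  let S : Set ℂ := U '' {i | dist η (f i) = l * dist ξ (x i)}
  have hS : (0:ℂ) ∈ convexHull ℝ S := by
    by_contra hcon
    have hSf : S.Finite := (Set.toFinite _).image _
    obtain ⟨g, u, hg0, hg⟩ := geometric_hahn_banach_point_closed (convex_convexHull ℝ S)
      (hSf.isCompact_convexHull (𝕜 := ℝ)).isClosed hcon
    rw [map_zero] at hg0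
    refine hnomove (hyp_move η f _ hle (g 1) (g Complex.I) fun i hi => ?_)
    have h1 : 0 < g (U i) := hg0.trans (hg _ (subset_convexHull ℝ S ⟨i, hi, rfl⟩))
    have h2 : g (hypG η (f i)) = g 1 * (hypG η (f i)).re + g Complex.I * (hypG η (f i)).im := by
      conv_lhs => rw [← Complex.re_add_im (hypG η (f i))]
      have e1 : ((hypG η (f i)).re : ℂ) = (hypG η (f i)).re • (1:ℂ) := by simp
      have e2 : ((hypG η (f i)).im : ℂ) * Complex.I = (hypG η (f i)).im • Complex.I := by simp
      rw [map_add, e2, e1, map_smul, map_smul]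
      simp [mul_comm]
    rw [← h2]
    simp only [U, map_smul, smul_eq_mul] at h1
    have h3 : 0 < sinh (dist η (f i)) := by
      rw [hi]; exact sinh_pos_iff.2 (mul_pos hl0 (hr i))
    exact (pos_iff_pos_of_mul_pos h1).1 (inv_pos.2 h3)
  rw [mem_convexHull_iff_exists_fintype] at hS
  obtain ⟨κ, _, w, p, hw0, hw1, hp, hsum⟩ := hS
  choose i hi hiU using hp
  have hi' : ∀ j, dist η (f (i j)) = l * dist ξ (x (i j)) := hi
  have hUsq : ∀ j, (U (i j)).re ^ 2 + (U (i j)).im ^ 2 = 1 := by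
    intro j
    have h3 : 0 < sinh (dist η (f (i j))) := by
      rw [hi' j]; exact sinh_pos_iff.2 (mul_pos hl0 (hr _))
    have := hypG_sq η (f (i j))
    simp only [U, Complex.smul_re, Complex.smul_im, smul_eq_mul, mul_pow, ← mul_add]
    rw [this]
    field_simp
  have hVsq : ∀ j, (V j).re ^ 2 + (V j).im ^ 2 = 1 := by
    intro j
    have h3 : 0 < sinh (dist ξ (x j)) := sinh_pos_iff.2 (hr _)
    have := hypG_sq ξ (x j)
    simp only [V, Complex.smul_re, Complex.smul_im, smul_eq_mul, mul_pow, ← mul_add]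
    rw [this]
    field_simp
  have hcomp : ∀ j k, dist (x (i j)) (x (i k)) = 0 ∨
      (V (i j)).re * (V (i k)).re + (V (i j)).im * (V (i k)).im <
      (U (i j)).re * (U (i k)).re + (U (i j)).im * (U (i k)).im := by
    intro j k
    by_contra hcon
    push Not at hcon
    obtain ⟨hd, hUV⟩ := hcon
    have hd0 : 0 < dist (x (i j)) (x (i k)) := lt_of_le_of_ne dist_nonneg (Ne.symm hd)
    have hUj : 0 < sinh (l * dist ξ (x (i j))) := sinh_pos_iff.2 (mul_pos hl0 (hr _))
    have hUk : 0 < sinh (l * dist ξ (x (i k))) := sinh_pos_iff.2 (mul_pos hl0 (hr _))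
    have hVj : 0 < sinh (dist ξ (x (i j))) := sinh_pos_iff.2 (hr _)
    have hVk : 0 < sinh (dist ξ (x (i k))) := sinh_pos_iff.2 (hr _)
    have := hyp_compare l hl1 (dist ξ (x (i j))) (dist ξ (x (i k))) (dist (x (i j)) (x (i k)))
      (dist (f (i j)) (f (i k))) _ _ (hr _) (hr _) dist_nonneg dist_nonneg
      (by nlinarith [hVsq (i j), hVsq (i k), sq_nonneg ((V (i j)).re + (V (i k)).re),
            sq_nonneg ((V (i j)).im + (V (i k)).im)])
      (by nlinarith [hVsq (i j), hVsq (i k), sq_nonneg ((V (i j)).re - (V (i k)).re),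
            sq_nonneg ((V (i j)).im - (V (i k)).im)]) hUV
      (by
        rw [hypG_cosh ξ]
        simp only [V, Complex.smul_re, Complex.smul_im, smul_eq_mul]
        field_simp)
      (by
        rw [hypG_cosh η]
        simp only [U, Complex.smul_re, Complex.smul_im, smul_eq_mul]
        rw [hi' j, hi' k]
        field_simp)
    have h5 := hf (i j) (i k)
    nlinarith
  have hcoin : ∀ j k, dist (x (i j)) (x (i k)) = 0 →
      (U (i j)).re * (U (i k)).re + (U (i j)).im * (U (i k)).im = 1 := by
    intro j k hd
    have h5 := hf (i j) (i k)
    rw [hd, mul_zero] at h5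
    have h6 : f (i j) = f (i k) := dist_le_zero.1 h5
    have h7 : U (i j) = U (i k) := by simp only [U, h6]
    rw [h7]
    linarith [hUsq k]
  have hcoinV : ∀ j k, (V (i j)).re * (V (i k)).re + (V (i j)).im * (V (i k)).im ≤ 1 := by
    intro j k
    nlinarith [hVsq (i j), hVsq (i k), sq_nonneg ((V (i j)).re - (V (i k)).re),
            sq_nonneg ((V (i j)).im - (V (i k)).im)]
  have hUre : ∑ j, w j * (U (i j)).re = 0 := by
    have := congrArg Complex.re hsum
    simpa [← hiU] using this
  have hUim : ∑ j, w j * (U (i j)).im = 0 := by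
    have := congrArg Complex.im hsum
    simpa [← hiU] using this
  have hexp : ∀ Y : ι → ℂ, ∑ j, ∑ k, w j * w k *
      ((Y (i j)).re * (Y (i k)).re + (Y (i j)).im * (Y (i k)).im) =
      (∑ j, w j * (Y (i j)).re) ^ 2 + (∑ j, w j * (Y (i j)).im) ^ 2 := by
    intro Y
    rw [sq, sq, Finset.sum_mul_sum, Finset.sum_mul_sum, ← Finset.sum_add_distrib]
    refine Finset.sum_congr rfl fun j _ => ?_
    rw [← Finset.sum_add_distrib]
    exact Finset.sum_congr rfl fun k _ => by ring
  let D : κ → κ → ℝ := fun j k => w j * w k *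
      ((U (i j)).re * (U (i k)).re + (U (i j)).im * (U (i k)).im) - w j * w k *
      ((V (i j)).re * (V (i k)).re + (V (i j)).im * (V (i k)).im)
  have hD0 : ∀ j k, 0 ≤ D j k := by
    intro j k
    have h1 : 0 ≤ w j * w k := mul_nonneg (hw0 j) (hw0 k)
    have h2 : (V (i j)).re * (V (i k)).re + (V (i j)).im * (V (i k)).im ≤
      (U (i j)).re * (U (i k)).re + (U (i j)).im * (U (i k)).im := by
      rcases hcomp j k with h | h
      · rw [hcoin j k h]; exact hcoinV j k
      · exact h.le
    exact sub_nonneg.2 (mul_le_mul_of_nonneg_left h2 h1)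
  have hDs : ∑ j, ∑ k, D j k ≤ 0 := by
    simp only [D, Finset.sum_sub_distrib]
    rw [hexp U, hexp V, hUre, hUim]
    have := sq_nonneg (∑ j, w j * (V (i j)).re)
    have := sq_nonneg (∑ j, w j * (V (i j)).im)
    linarith
  have hDz : ∀ j k, D j k = 0 := by
    intro j k
    refine le_antisymm ?_ (hD0 j k)
    have h1 : D j k ≤ ∑ k, D j k :=
      Finset.single_le_sum (f := fun k => D j k) (fun k _ => hD0 j k) (Finset.mem_univ k)
    have h2 : ∑ k, D j k ≤ ∑ j, ∑ k, D j k :=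
      Finset.single_le_sum (f := fun j => ∑ k, D j k)
        (fun j _ => Finset.sum_nonneg fun k _ => hD0 j k) (Finset.mem_univ j)
    linarith
  obtain ⟨j, hj⟩ : ∃ j, 0 < w j := by
    by_contra hcon
    push Not at hcon
    have : ∑ j, w j ≤ 0 := Finset.sum_nonpos fun j _ => hcon j
    linarith
  have hone : ∀ k, w k * ((U (i j)).re * (U (i k)).re + (U (i j)).im * (U (i k)).im) = w k := by
    intro k
    rcases (hw0 k).eq_or_lt with h | h
    · rw [← h, zero_mul]
    · rcases hcomp j k with h1 | h1
      · rw [hcoin j k h1, mul_one]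
      · exfalso
        have h2 := mul_lt_mul_of_pos_left h1 (mul_pos hj h)
        have h3 := hDz j k
        simp only [D] at h3
        linarith
  have : ∑ k, w k = 0 := by
    calc ∑ k, w k = ∑ k, w k * ((U (i j)).re * (U (i k)).re + (U (i j)).im * (U (i k)).im) :=
          Finset.sum_congr rfl fun k _ => (hone k).symm
      _ = (U (i j)).re * ∑ k, w k * (U (i k)).re + (U (i j)).im * ∑ k, w k * (U (i k)).im := by
          rw [Finset.mul_sum, Finset.mul_sum, ← Finset.sum_add_distrib]
          exact Finset.sum_congr rfl fun k _ => by ring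
      _ = 0 := by rw [hUre, hUim]; ring
  linarith

theorem stmt_12 (C : ℝ) (hC : 1 ≤ C) (X' : Set ℍ) (hne : X'.Nonempty) (f : X' → ℍ)
    (hf : ∀ x y : X', dist (f x) (f y) ≤ C * dist (x : ℍ) (y : ℍ)) (ξ : ℍ) :
    ∃ η : ℍ, ∀ x : X', dist η (f x) ≤ C * dist ξ (x : ℍ) := by
  by_cases hξ : ξ ∈ X'
  · exact ⟨f ⟨ξ, hξ⟩, fun x => hf ⟨ξ, hξ⟩ x⟩
  have hx : ∀ x : X', ξ ≠ x := fun x h => hξ (h ▸ x.2)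
  obtain ⟨x0, hx0⟩ := hne
  have h := (isCompact_closedBall (f ⟨x0, hx0⟩) (C * dist ξ x0)).inter_iInter_nonempty
    (fun x : X' => Metric.closedBall (f x) (C * dist ξ (x : ℍ)))
    (fun x => Metric.isClosed_closedBall) (by
      classical
      intro u
      obtain ⟨η, hη⟩ := hyp_finite C hC (ι := {x // x ∈ insert ⟨x0, hx0⟩ u})
        (fun x => ((x : X') : ℍ)) (fun x => f x) (fun a b => hf a b) ξ (fun a => hx a)
      refine ⟨η, hη ⟨_, Finset.mem_insert_self _ _⟩, ?_⟩
      simp only [Set.mem_iInter]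
      exact fun a ha => hη ⟨a, Finset.mem_insert_of_mem ha⟩)
  obtain ⟨η, -, hη⟩ := h
  exact ⟨η, fun x => Set.mem_iInter.1 hη x⟩
end

section
/- For every real C with 0 ≤ C < 1 there exists a real C* with C ≤ C* < 1 such that the following holds: for every subset X' of the hyperbolic plane ℍ, every point ξ ∈ ℍ \ X', and every C-Lipschitz map f : X' → ℍ, there exists a point η ∈ ℍ with d(η, f(x)) ≤ C*·d(ξ, x) for all x ∈ X'; in other words, f extends to a C*-Lipschitz map on X' ∪ {ξ}. The constant C* depends only on C. -/
open scoped UpperHalfPlane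

namespace HypExt

open Real

lemma aux0 {k d : ℝ} (hk0 : 0 ≤ k) (hk1 : k ≤ 1) (hd : 0 ≤ d) :
    k * cosh (k * d) * sinh d ≤ sinh (k * d) * cosh d := by
  have hder : ∀ x : ℝ, HasDerivAt (fun x => sinh (k * x) * cosh x - k * cosh (k * x) * sinh x)
      ((1 - k ^ 2) * (sinh (k * x) * sinh x)) x := by
    intro x
    have h1 : HasDerivAt (fun x : ℝ => k * x) k x := by
      simpa using (hasDerivAt_id x).const_mul k
    have h2 := h1.sinh
    have h3 := h1.cosh
    have h4 := (h2.mul (Real.hasDerivAt_cosh x)).sub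
      ((h3.const_mul k).mul (Real.hasDerivAt_sinh x))
    refine h4.congr_deriv ?_
    ring
  have hm : MonotoneOn (fun x => sinh (k * x) * cosh x - k * cosh (k * x) * sinh x)
      (Set.Ici 0) := by
    refine monotoneOn_of_deriv_nonneg (convex_Ici 0)
      (fun x _ => (hder x).continuousAt.continuousWithinAt)
      (fun x _ => (hder x).differentiableAt.differentiableWithinAt) ?_
    intro x hx
    rw [interior_Ici] at hx
    have hx' : (0:ℝ) < x := hx
    rw [(hder x).deriv]
    have e1 : 0 ≤ sinh (k * x) := Real.sinh_nonneg_iff.2 (by positivity)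
    have e2 : 0 ≤ sinh x := Real.sinh_nonneg_iff.2 hx'.le
    have e3 : 0 ≤ 1 - k ^ 2 := by nlinarith
    positivity
  have := hm (Set.mem_Ici.2 le_rfl) (Set.mem_Ici.2 hd) hd
  simp at this
  linarith

lemma aux1 {k d s : ℝ} (hk0 : 0 ≤ k) (hk1 : k ≤ 1) (hd : 0 ≤ d) (hds : d ≤ s) :
    sinh (k * s) * sinh d ≤ sinh (k * d) * sinh s := by
  rcases hd.eq_or_lt with rfl | hd
  · simp
  have hder : ∀ x : ℝ, 0 < x → HasDerivAt (fun x => sinh (k * x) / sinh x)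
      ((k * cosh (k * x) * sinh x - sinh (k * x) * cosh x) / sinh x ^ 2) x := by
    intro x hx
    have h1 : HasDerivAt (fun x : ℝ => k * x) k x := by
      simpa using (hasDerivAt_id x).const_mul k
    have h4 := h1.sinh.div (Real.hasDerivAt_sinh x) (Real.sinh_pos_iff.2 hx).ne'
    refine h4.congr_deriv ?_
    ring
  have hm : AntitoneOn (fun x => sinh (k * x) / sinh x) (Set.Ioi 0) := by
    refine antitoneOn_of_deriv_nonpos (convex_Ioi 0)
      (fun x hx => (hder x hx).continuousAt.continuousWithinAt)
      (fun x hx => (hder x (interior_subset hx)).differentiableAt.differentiableWithinAt) ?_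
    intro x hx
    have hx' : (0:ℝ) < x := interior_subset hx
    rw [(hder x hx').deriv]
    exact div_nonpos_of_nonpos_of_nonneg (by linarith [aux0 hk0 hk1 hx'.le]) (sq_nonneg _)
  have hs : 0 < s := hd.trans_le hds
  have := hm (Set.mem_Ioi.2 hd) (Set.mem_Ioi.2 hs) hds
  simp only at this
  rwa [div_le_div_iff₀ (Real.sinh_pos_iff.2 hs) (Real.sinh_pos_iff.2 hd)] at this

lemma aux2 {k d e s : ℝ} (hk0 : 0 ≤ k) (hk1 : k ≤ 1) (he : 0 ≤ e) (hed : e ≤ d) (hds : d ≤ s) :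
    cosh (k * e) * sinh s - k * sinh (k * s) * cosh e
      ≤ cosh (k * d) * sinh s - k * sinh (k * s) * cosh d := by
  have hder : ∀ x : ℝ, HasDerivAt (fun x => cosh (k * x) * sinh s - k * sinh (k * s) * cosh x)
      (k * (sinh (k * x) * sinh s - sinh (k * s) * sinh x)) x := by
    intro x
    have h1 : HasDerivAt (fun x : ℝ => k * x) k x := by
      simpa using (hasDerivAt_id x).const_mul k
    have h4 := (h1.cosh.mul_const (sinh s)).sub
      ((Real.hasDerivAt_cosh x).const_mul (k * sinh (k * s)))
    refine h4.congr_deriv ?_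
    ring
  have hm : MonotoneOn (fun x => cosh (k * x) * sinh s - k * sinh (k * s) * cosh x)
      (Set.Icc 0 s) := by
    refine monotoneOn_of_deriv_nonneg (convex_Icc 0 s)
      (fun x _ => (hder x).continuousAt.continuousWithinAt)
      (fun x _ => (hder x).differentiableAt.differentiableWithinAt) ?_
    intro x hx
    have hx' := interior_subset hx
    rw [(hder x).deriv]
    exact mul_nonneg hk0 (by linarith [aux1 hk0 hk1 hx'.1 hx'.2])
  exact hm ⟨he, hed.trans hds⟩ ⟨he.trans hed, hds⟩ hed

lemma aux3 {k s : ℝ} (hk0 : 0 ≤ k) (hk1 : k ≤ 1) (hs : 0 ≤ s) :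
    (cosh (k * s) - 1) * sinh s ≤ sinh (k * s) * (cosh s - 1) := by
  obtain ⟨x, rfl⟩ : ∃ x, s = 2 * x := ⟨s / 2, by ring⟩
  have hx : 0 ≤ x := by linarith
  have e : k * (2 * x) = 2 * (k * x) := by ring
  rw [e, Real.cosh_two_mul, Real.sinh_two_mul, Real.cosh_two_mul, Real.sinh_two_mul,
    Real.cosh_sq, Real.cosh_sq]
  have h1 : 0 ≤ sinh (x - k * x) := Real.sinh_nonneg_iff.2 (by nlinarith)
  rw [Real.sinh_sub] at h1
  have h2 : 0 ≤ sinh x := Real.sinh_nonneg_iff.2 hx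
  have h3 : 0 ≤ sinh (k * x) := Real.sinh_nonneg_iff.2 (by positivity)
  have := mul_nonneg (mul_nonneg h2 h3) h1
  nlinarith

lemma gap {k u e d s : ℝ} (hk0 : 0 ≤ k) (hk1 : k ≤ 1) (he : 0 ≤ e) (hed : e ≤ d) (hds : d ≤ s)
    (hs : 0 < s) (hu0 : 0 ≤ u) (hu1 : u ≤ 1) (hd : cosh d = (1 - u) * cosh e + u * cosh s) :
    cosh (k * d) ≤ (1 - u) * cosh (k * e) + u * cosh (k * s) + (1 - k) * (cosh (k * s) - 1) := by
  have hS : 0 < sinh s := Real.sinh_pos_iff.2 hs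
  have h1 := aux2 hk0 hk1 (he.trans hed) hds le_rfl
  have h2 := aux2 hk0 hk1 le_rfl he (hed.trans hds)
  have h3 := aux3 hk0 hk1 hs.le
  simp only [mul_zero, Real.cosh_zero] at h2
  have h4 := Real.one_le_cosh (k * s)
  rw [hd] at h1
  refine le_of_mul_le_mul_right ?_ hS
  have h5 : 0 ≤ (1 - u) * ((cosh (k * e) * sinh s - k * sinh (k * s) * cosh e)
    - (1 * sinh s - k * sinh (k * s) * 1)) := mul_nonneg (by linarith) (by linarith)
  have h6 : 0 ≤ (1 - u) * (k * (sinh (k * s) * (cosh s - 1) - (cosh (k * s) - 1) * sinh s)) :=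
    mul_nonneg (by linarith) (mul_nonneg hk0 (by linarith))
  have h7 : 0 ≤ u * ((1 - k) * ((cosh (k * s) - 1) * sinh s)) :=
    mul_nonneg hu0 (mul_nonneg (by linarith) (mul_nonneg (by linarith) hS.le))
  nlinarith

lemma cosh_scale {m t : ℝ} (hm0 : 0 ≤ m) (hm1 : m ≤ 1) (ht : 0 ≤ t) :
    cosh (m * t) - 1 ≤ m * (cosh t - 1) := by
  have h := convexOn_exp
  have h1 := h.2 (Set.mem_univ t) (Set.mem_univ 0) hm0 (by linarith : 0 ≤ 1 - m) (by ring)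
  have h2 := h.2 (Set.mem_univ (-t)) (Set.mem_univ 0) hm0 (by linarith : 0 ≤ 1 - m) (by ring)
  simp only [smul_eq_mul, mul_zero, add_zero, Real.exp_zero, mul_neg] at h1 h2
  rw [Real.cosh_eq, Real.cosh_eq]
  linarith

/-- The key trigonometric estimate for a pair of points. -/
lemma pair {C k a b d : ℝ} (hC : 0 ≤ C) (hCk : C ≤ k) (hk0 : 0 < k) (hk1 : k ≤ 1)
    (ha : 0 < a) (hb : 0 < b) (hd1 : |a - b| ≤ d) (hd2 : d ≤ a + b) :
    cosh (C * d) - 1 ≤ C / k * (3 - 2 * k) * (cosh (k * a) * cosh (k * b) - 1)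
      - C / k * ((sinh (k * a) / sinh a) * (sinh (k * b) / sinh b)
          * (cosh a * cosh b - cosh d)) := by
  have hA := Real.sinh_pos_iff.2 ha
  have hB := Real.sinh_pos_iff.2 hb
  have hd0 : 0 ≤ d := (abs_nonneg _).trans hd1
  set c := (cosh a * cosh b - cosh d) / (sinh a * sinh b) with hc
  have hc' : cosh a * cosh b - cosh d = c * (sinh a * sinh b) := by
    rw [hc]; field_simp
  have hl : cosh (a - b) ≤ cosh d := by
    rw [Real.cosh_le_cosh, abs_of_nonneg hd0]; exact hd1
  have hr : cosh d ≤ cosh (a + b) := by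
    rw [Real.cosh_le_cosh, abs_of_nonneg hd0]; exact hd2.trans (le_abs_self _)
  rw [Real.cosh_sub] at hl
  rw [Real.cosh_add] at hr
  have hAB := mul_pos hA hB
  have hc1 : c ≤ 1 := by
    by_contra h
    push Not at h
    nlinarith [mul_lt_mul_of_pos_right h hAB]
  have hc2 : -1 ≤ c := by
    by_contra h
    push Not at h
    nlinarith [mul_lt_mul_of_pos_right h hAB]
  have hg := gap (u := (1 - c) / 2) hk0.le hk1 (abs_nonneg _) hd1 hd2 (by linarith)
    (by linarith) (by linarith) (by
      rw [Real.cosh_abs, Real.cosh_sub, Real.cosh_add]; linarith)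
  have e1 : cosh (k * |a - b|) = cosh (k * a) * cosh (k * b) - sinh (k * a) * sinh (k * b) := by
    rw [← Real.cosh_sub, ← mul_sub, ← Real.cosh_abs (k * (a - b)), abs_mul, abs_of_pos hk0]
  have e3 := Real.one_le_cosh (k * |a - b|)
  rw [mul_add k a b, Real.cosh_add, e1] at hg
  rw [e1] at e3
  have hm : 0 ≤ C / k := by positivity
  have hs := cosh_scale (m := C / k) (t := k * d) hm ((div_le_one hk0).2 hCk) (by positivity)
  have e2 : C / k * (k * d) = C * d := by field_simp
  rw [e2] at hs
  have e4 : (sinh (k * a) / sinh a) * (sinh (k * b) / sinh b) * (cosh a * cosh b - cosh d)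
      = c * (sinh (k * a) * sinh (k * b)) := by
    rw [hc']; field_simp
  rw [e4]
  have e5 : cosh (k * d) - 1 ≤ (3 - 2 * k) * (cosh (k * a) * cosh (k * b) - 1)
      - c * (sinh (k * a) * sinh (k * b)) := by
    nlinarith [mul_nonneg (by linarith : 0 ≤ 1 - k) (by linarith :
      0 ≤ cosh (k * a) * cosh (k * b) - sinh (k * a) * sinh (k * b) - 1)]
  have := mul_le_mul_of_nonneg_left e5 hm
  linarith

lemma cosh_dist_formula (z w : ℍ) :
    cosh (dist z w) = ((z.re - w.re) ^ 2 + z.im ^ 2 + w.im ^ 2) / (2 * z.im * w.im) := 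
  UpperHalfPlane.cosh_dist' z w

/-- Gram identity. -/
lemma gram {ι : Type*} [Fintype ι] (w : ι → ℝ) (z : ι → ℍ) :
    ∑ i, ∑ j, w i * w j * cosh (dist (z i) (z j)) =
      (∑ i, w i / (z i).im) * (∑ i, w i * (((z i).re ^ 2 + (z i).im ^ 2) / (z i).im))
        - (∑ i, w i * ((z i).re / (z i).im)) ^ 2 := by
  have h : ∀ i j, w i * w j * cosh (dist (z i) (z j)) =
      (w i / (z i).im * (w j * (((z j).re ^ 2 + (z j).im ^ 2) / (z j).im))) / 2
      + (w j / (z j).im * (w i * (((z i).re ^ 2 + (z i).im ^ 2) / (z i).im))) / 2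
      - (w i * ((z i).re / (z i).im)) * (w j * ((z j).re / (z j).im)) := by
    intro i j
    have h1 := (z i).im_pos
    have h2 := (z j).im_pos
    rw [cosh_dist_formula]
    field_simp
    ring
  simp_rw [h, Finset.sum_sub_distrib, Finset.sum_add_distrib, ← Finset.sum_div]
  rw [sq, Finset.sum_mul_sum, Finset.sum_mul_sum]
  rw [Finset.sum_comm (f := fun i j => w j / (z j).im * (w i * (((z i).re ^ 2 + (z i).im ^ 2) / (z i).im)))]
  ring

lemma gram_psd {ι : Type*} [Fintype ι] (w : ι → ℝ) (z : ι → ℍ) (p : ℍ) :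
    0 ≤ ∑ i, ∑ j, w i * w j *
      (cosh (dist p (z i)) * cosh (dist p (z j)) - cosh (dist (z i) (z j))) := by
  have h : ∑ i, ∑ j, w i * w j *
      (cosh (dist p (z i)) * cosh (dist p (z j)) - cosh (dist (z i) (z j)))
      = (∑ i, w i * cosh (dist p (z i))) ^ 2 - ∑ i, ∑ j, w i * w j * cosh (dist (z i) (z j)) := by
    rw [sq, Finset.sum_mul_sum, ← Finset.sum_sub_distrib]
    refine Finset.sum_congr rfl fun i _ => ?_
    rw [← Finset.sum_sub_distrib]
    refine Finset.sum_congr rfl fun j _ => ?_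
    ring
  rw [h, gram]
  have hp := p.im_pos
  have h2 : ∑ i, w i * cosh (dist p (z i)) =
      ((∑ i, w i * (((z i).re ^ 2 + (z i).im ^ 2) / (z i).im))
        - 2 * p.re * (∑ i, w i * ((z i).re / (z i).im))
        + (p.re ^ 2 + p.im ^ 2) * (∑ i, w i / (z i).im)) / (2 * p.im) := by
    rw [Finset.mul_sum, Finset.mul_sum, ← Finset.sum_sub_distrib, ← Finset.sum_add_distrib,
      Finset.sum_div]
    refine Finset.sum_congr rfl fun i _ => ?_
    have h1 := (z i).im_pos
    rw [cosh_dist_formula]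
    field_simp
    ring
  rw [h2]
  generalize (∑ i, w i * (((z i).re ^ 2 + (z i).im ^ 2) / (z i).im)) = Q
  generalize (∑ i, w i * ((z i).re / (z i).im)) = X
  generalize (∑ i, w i / (z i).im) = P
  rw [div_pow, sub_nonneg, le_div_iff₀ (by positivity)]
  nlinarith [sq_nonneg (Q - 2 * p.re * X + p.re ^ 2 * P - p.im ^ 2 * P),
    mul_nonneg (sq_nonneg p.im) (sq_nonneg (X - p.re * P))]

/-- Theorem of the alternative for finitely many convex functions. -/
lemma alternative {ι : Type*} [Fintype ι] [Nonempty ι] (q : ι → ℝ × ℝ → ℝ)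
    (hq : ∀ i, ConvexOn ℝ Set.univ (q i)) (hno : ¬ ∃ z, ∀ i, q i z < 0) :
    ∃ w : ι → ℝ, (∀ i, 0 ≤ w i) ∧ (∃ i, 0 < w i) ∧ ∀ z, 0 ≤ ∑ i, w i * q i z := by
  classical
  let N : Set (ι → ℝ) := Set.pi Set.univ fun _ => Set.Iio 0
  let S : Set (ι → ℝ) := {v | ∃ z, ∀ i, q i z ≤ v i}
  have hN : Convex ℝ N := convex_pi fun _ _ => convex_Iio 0
  have hNo : IsOpen N := isOpen_set_pi Set.finite_univ fun _ _ => isOpen_Iio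
  have hS : Convex ℝ S := by
    rintro v ⟨z, hz⟩ v' ⟨z', hz'⟩ a b ha hb hab
    refine ⟨a • z + b • z', fun i => ((hq i).2 trivial trivial ha hb hab).trans ?_⟩
    simp only [smul_eq_mul, Pi.add_apply, Pi.smul_apply]
    exact add_le_add (mul_le_mul_of_nonneg_left (hz i) ha) (mul_le_mul_of_nonneg_left (hz' i) hb)
  have hdis : Disjoint N S := by
    rw [Set.disjoint_left]
    rintro v hv ⟨z, hz⟩
    exact hno ⟨z, fun i => (hz i).trans_lt (hv i trivial)⟩
  obtain ⟨f, u, hf1, hf2⟩ := geometric_hahn_banach_open hN hNo hS hdis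
  have hf : ∀ v, f v = ∑ i, v i * f (Pi.single i 1) := by
    intro v
    conv_lhs => rw [pi_eq_sum_univ' v]
    simp [map_sum]
  have hu : 0 ≤ u := by
    by_contra hu
    push Not at hu
    set r := f (fun _ => -1) with hr
    have key : ∀ t > 0, t * r < u := by
      intro t ht
      have := hf1 (t • (fun _ => -1)) (by
        intro i _
        simp [ht])
      rwa [map_smul, smul_eq_mul] at this
    have h1 := key 1 one_pos
    have hrn : r < 0 := by linarith
    have h2 := key (u / (2 * r)) (div_pos_of_neg_of_neg hu (by linarith))
    have hr0 : r ≠ 0 := hrn.ne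
    have : u / (2 * r) * r = u / 2 := by field_simp
    linarith
  have hw : ∀ i, 0 ≤ f (Pi.single i 1) := by
    intro i
    by_contra hi
    push Not at hi
    set r := f (Pi.single i 1) with hr
    set m := f (fun _ => -1) with hm
    have key : ∀ t ≥ 0, m - t * r < u := by
      intro t ht
      have := hf1 ((fun _ => -1) - t • Pi.single i 1) (by
        intro j _
        simp only [Pi.sub_apply, Pi.smul_apply, Set.mem_Iio, smul_eq_mul]
        by_cases hij : j = i
        · subst hij; simp; linarith
        · simp [hij])
      rwa [map_sub, map_smul, smul_eq_mul] at this
    have h0 := key 0 le_rfl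
    have h2 := key ((u - m) / (-r)) (div_nonneg (by linarith) (by linarith))
    have : (u - m) / (-r) * r = m - u := by
      have : r ≠ 0 := hi.ne
      field_simp
      ring
    linarith
  have hq' : ∀ z, u ≤ ∑ i, f (Pi.single i 1) * q i z := by
    intro z
    have := hf2 (fun i => q i z) ⟨z, fun i => le_rfl⟩
    rw [hf] at this
    simpa [mul_comm] using this
  refine ⟨fun i => f (Pi.single i 1), hw, ?_, fun z => hu.trans (hq' z)⟩
  by_contra hcon
  push Not at hcon
  have hz : ∀ i, f (Pi.single i 1) = 0 := fun i => le_antisymm (hcon i) (hw i)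
  have h1 := hf1 (fun _ => -1) (by intro i _; simp)
  have h2 := hq' 0
  rw [hf] at h1
  simp [hz] at h1 h2
  linarith

lemma q_convex (α β γ δ : ℝ) (hα : 0 ≤ α) :
    ConvexOn ℝ Set.univ (fun z : ℝ × ℝ => α * (z.1 ^ 2 + z.2 ^ 2) - β * z.1 + γ - δ * z.2) := by
  refine ⟨convex_univ, ?_⟩
  rintro ⟨x, y⟩ - ⟨x', y'⟩ - a b ha hb hab
  obtain rfl : b = 1 - a := by linarith
  simp only [Prod.smul_mk, Prod.mk_add_mk, smul_eq_mul]
  nlinarith [mul_nonneg hα (mul_nonneg (mul_nonneg ha hb) (sq_nonneg (x - x'))),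
    mul_nonneg hα (mul_nonneg (mul_nonneg ha hb) (sq_nonneg (y - y')))]

lemma finite_case {ι : Type*} [Fintype ι] [Nonempty ι] {C k : ℝ} (hC : 0 ≤ C) (hCk : C ≤ k)
    (hk0 : 0 < k) (hk1 : k ≤ 1) (hk : C / k * (3 - 2 * k) < 1)
    (x y : ι → ℍ) (ξ : ℍ) (hξ : ∀ i, ξ ≠ x i)
    (hf : ∀ i j, dist (y i) (y j) ≤ C * dist (x i) (x j)) :
    ∃ η : ℍ, ∀ i, dist η (y i) ≤ k * dist ξ (x i) := by
  set a : ι → ℝ := fun i => dist ξ (x i) with ha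
  have hapos : ∀ i, 0 < a i := fun i => dist_pos.2 (hξ i)
  set h : ι → ℝ := fun i => cosh (k * a i) with hh
  let q : ι → ℝ × ℝ → ℝ := fun i z => (1 / (y i).im) * (z.1 ^ 2 + z.2 ^ 2)
    - (2 * ((y i).re / (y i).im)) * z.1 + ((y i).re ^ 2 + (y i).im ^ 2) / (y i).im
    - (2 * h i) * z.2
  by_cases hex : ∃ z, ∀ i, q i z < 0
  · obtain ⟨⟨s, t⟩, hz⟩ := hex
    have hz' : ∀ i, (s - (y i).re) ^ 2 + t ^ 2 + (y i).im ^ 2 < 2 * t * (y i).im * h i := by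
      intro i
      have h1 := (y i).im_pos
      have h2 := mul_neg_of_pos_of_neg h1 (hz i)
      have h3 : (y i).im * q i (s, t) =
          (s - (y i).re) ^ 2 + t ^ 2 + (y i).im ^ 2 - 2 * t * (y i).im * h i := by
        simp only [q]
        field_simp
        ring
      linarith
    have ht : 0 < t := by
      obtain ⟨i⟩ := ‹Nonempty ι›
      by_contra hcon
      push Not at hcon
      have h1 := (y i).im_pos
      have h2 : 0 < h i := Real.cosh_pos _
      have := hz' i
      nlinarith [sq_nonneg (s - (y i).re), sq_nonneg t, mul_pos h1 h1,
        mul_nonneg (neg_nonneg.2 hcon) (mul_pos h1 h2).le]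
    refine ⟨⟨⟨s, t⟩, ht⟩, fun i => ?_⟩
    have h1 := (y i).im_pos
    have h2 : 0 ≤ k * a i := by have := hapos i; positivity
    rw [← abs_of_nonneg (dist_nonneg (x := (⟨⟨s, t⟩, ht⟩ : ℍ)) (y := y i)), ← abs_of_nonneg h2,
      ← Real.cosh_le_cosh, cosh_dist_formula]
    change ((s - (y i).re) ^ 2 + t ^ 2 + (y i).im ^ 2) / (2 * t * (y i).im) ≤ h i
    rw [div_le_iff₀ (by positivity)]
    linarith [hz' i]
  · exfalso
    obtain ⟨w, hw0, ⟨i₀, hi₀⟩, hw⟩ := alternative q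
      (fun i => q_convex _ _ _ _ (one_div_nonneg.2 (y i).im_pos.le)) hex
    set P := ∑ i, w i / (y i).im with hP
    set X := ∑ i, w i * ((y i).re / (y i).im) with hX
    set Q := ∑ i, w i * (((y i).re ^ 2 + (y i).im ^ 2) / (y i).im) with hQ
    set H := ∑ i, w i * h i with hH
    have hPpos : 0 < P := by
      refine Finset.sum_pos' (fun i _ => div_nonneg (hw0 i) (y i).im_pos.le)
        ⟨i₀, Finset.mem_univ _, div_pos hi₀ (y i₀).im_pos⟩
    have hsum : ∀ s t : ℝ, ∑ i, w i * q i (s, t) = P * (s ^ 2 + t ^ 2) - 2 * X * s + Q - 2 * H * t := by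
      intro s t
      rw [hP, hX, hQ, hH, Finset.mul_sum, Finset.mul_sum, Finset.sum_mul, Finset.sum_mul,
        Finset.sum_mul, ← Finset.sum_sub_distrib, ← Finset.sum_add_distrib,
        ← Finset.sum_sub_distrib]
      refine Finset.sum_congr rfl fun i _ => ?_
      simp only [q]
      ring
    have h1 := hw (X / P, H / P)
    rw [hsum] at h1
    have h2 : H ^ 2 ≤ P * Q - X ^ 2 := by
      have h3 := mul_nonneg hPpos.le h1
      have h4 : P * (P * ((X / P) ^ 2 + (H / P) ^ 2) - 2 * X * (X / P) + Q - 2 * H * (H / P))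
        = P * Q - X ^ 2 - H ^ 2 := by
        field_simp
        ring
      linarith
    rw [hP, hQ, hX, ← gram] at h2
    -- source side
    have h3 := gram_psd (fun i => w i * (sinh (k * a i) / sinh (a i))) x ξ
    set M := C / k with hM
    have hM0 : 0 ≤ M := by positivity
    have h4 : ∀ i j, w i * w j * cosh (dist (y i) (y j)) ≤ w i * w j * (h i * h j)
        - (1 - M * (3 - 2 * k)) * (w i * w j * (h i * h j - 1))
        - M * (w i * (sinh (k * a i) / sinh (a i)) * (w j * (sinh (k * a j) / sinh (a j))) *
          (cosh (a i) * cosh (a j) - cosh (dist (x i) (x j)))) := by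
      intro i j
      have g1 := pair hC hCk hk0 hk1 (hapos i) (hapos j) (d := dist (x i) (x j))
        (by
          have := abs_dist_sub_le (x i) (x j) ξ
          simpa [ha, dist_comm] using this)
        (by
          have := dist_triangle_left (x i) (x j) ξ
          simpa [ha] using this)
      have g2 : cosh (dist (y i) (y j)) ≤ cosh (C * dist (x i) (x j)) := by
        rw [Real.cosh_le_cosh, abs_of_nonneg dist_nonneg]
        exact (hf i j).trans (le_abs_self _)
      have g3 := mul_le_mul_of_nonneg_left (g2.trans (sub_le_iff_le_add.1 g1))
        (mul_nonneg (hw0 i) (hw0 j))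
      refine g3.trans (le_of_eq ?_)
      simp only [hh]
      ring
    have h5 := Finset.sum_le_sum fun i (_ : i ∈ Finset.univ) =>
      Finset.sum_le_sum fun j (_ : j ∈ Finset.univ) => h4 i j
    simp only [Finset.sum_sub_distrib, ← Finset.mul_sum] at h5
    have h6 : ∑ i, ∑ j, w i * w j * (h i * h j) = H ^ 2 := by
      rw [hH, sq, Finset.sum_mul_sum]
      refine Finset.sum_congr rfl fun i _ => Finset.sum_congr rfl fun j _ => ?_
      ring
    have hh1 : ∀ i, 1 ≤ h i := fun i => Real.one_le_cosh _
    have h7 : ∀ i j, 0 ≤ w i * w j * (h i * h j - 1) := fun i j =>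
      mul_nonneg (mul_nonneg (hw0 i) (hw0 j)) (by nlinarith [hh1 i, hh1 j])
    have h8 : 0 < ∑ i, ∑ j, w i * w j * (h i * h j - 1) := by
      refine Finset.sum_pos' (fun i _ => Finset.sum_nonneg fun j _ => h7 i j)
        ⟨i₀, Finset.mem_univ _, Finset.sum_pos' (fun j _ => h7 _ j) ⟨i₀, Finset.mem_univ _, ?_⟩⟩
      have : 1 < h i₀ := Real.one_lt_cosh.2 (mul_pos hk0 (hapos i₀)).ne'
      exact mul_pos (mul_pos hi₀ hi₀) (by nlinarith)
    rw [h6] at h5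
    have h9 := mul_pos (sub_pos.2 hk) h8
    have h10 := mul_nonneg hM0 h3
    linarith

end HypExt

theorem stmt_14 (C : ℝ) (hC0 : 0 ≤ C) (hC1 : C < 1) :
    ∃ Cstar : ℝ, C ≤ Cstar ∧ Cstar < 1 ∧
      ∀ (X' : Set ℍ) (ξ : ℍ), ξ ∉ X' →
        ∀ f : X' → ℍ, (∀ x y : X', dist (f x) (f y) ≤ C * dist (x : ℍ) (y : ℍ)) →
          ∃ η : ℍ, ∀ x : X', dist η (f x) ≤ Cstar * dist ξ (x : ℍ) := by
  obtain ⟨k, hk, hk1⟩ : ∃ k, 3 * C / (1 + 2 * C) < k ∧ k < 1 :=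
    exists_between (by rw [div_lt_one (by linarith)]; linarith)
  have hk0 : 0 < k := lt_of_le_of_lt (by positivity) hk
  rw [div_lt_iff₀ (by linarith)] at hk
  have hkk : C / k * (3 - 2 * k) < 1 := by
    rw [div_mul_eq_mul_div, div_lt_one hk0]
    linarith
  have hCk : C ≤ k := by nlinarith
  refine ⟨k, hCk, hk1, fun X' ξ hξ f hf => ?_⟩
  rcases isEmpty_or_nonempty X' with hE | ⟨⟨x₀⟩⟩
  · exact ⟨ξ, fun x => (hE.false x).elim⟩
  have hne : (Metric.closedBall (f x₀) (k * dist ξ (x₀ : ℍ)) ∩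
      ⋂ x : X', Metric.closedBall (f x) (k * dist ξ (x : ℍ))).Nonempty := by
    refine (isCompact_closedBall _ _).inter_iInter_nonempty _
      (fun x => Metric.isClosed_closedBall) fun u => ?_
    classical
    let v := insert x₀ u
    haveI : Nonempty v := ⟨⟨x₀, Finset.mem_insert_self _ _⟩⟩
    obtain ⟨η, hη⟩ := HypExt.finite_case (ι := v) hC0 hCk hk0 hk1.le hkk
      (fun i => (i.1 : ℍ)) (fun i => f i.1) ξ (fun i h => hξ (h ▸ i.1.2)) (fun i j => hf i.1 j.1)
    refine ⟨η, Metric.mem_closedBall.2 (hη ⟨x₀, Finset.mem_insert_self _ _⟩), ?_⟩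
    simp only [Set.mem_iInter, Metric.mem_closedBall]
    intro i hi
    exact hη ⟨i, Finset.mem_insert_of_mem hi⟩
  obtain ⟨η, -, hη⟩ := hne
  refine ⟨η, fun x => ?_⟩
  exact Metric.mem_closedBall.1 (Set.mem_iInter.1 hη x)
end

section
/- For every real C with 0 ≤ C < 1 there exists a real C' with C ≤ C' < 1 such that: for every subset X' of the hyperbolic plane ℍ and every C-Lipschitz map f : X' → ℍ, there exists a C'-Lipschitz map F : ℍ → ℍ with F(x) = f(x) for all x ∈ X'. The constant C' depends only on C. -/
open scoped UpperHalfPlane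

namespace HypExt

/-- Light-cone coordinates on the hyperboloid model. -/
noncomputable def ca (z : ℍ) : ℝ := z.re / z.im
noncomputable def cb (z : ℍ) : ℝ := 1 / z.im
noncomputable def cc (z : ℍ) : ℝ := (z.re ^ 2 + z.im ^ 2) / z.im

lemma cb_pos (z : ℍ) : 0 < cb z := div_pos one_pos z.im_pos

lemma form_self (z : ℍ) : cb z * cc z - ca z ^ 2 = 1 := by
  have := z.im_pos
  unfold ca cb cc
  field_simp
  ring

lemma cosh_form (z w : ℍ) :
    Real.cosh (dist z w) = (cb z * cc w + cb w * cc z) / 2 - ca z * ca w := by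
  have := z.im_pos
  have := w.im_pos
  rw [UpperHalfPlane.cosh_dist']
  unfold ca cb cc
  field_simp
  ring

lemma exists_point (a b c : ℝ) (hb : 0 < b) (hQ : 0 < b * c - a ^ 2) :
    ∃ q : ℍ, ca q = a / √(b * c - a ^ 2) ∧ cb q = b / √(b * c - a ^ 2) ∧
      cc q = c / √(b * c - a ^ 2) := by
  have hs := Real.sqrt_pos.2 hQ
  have hs2 := Real.sq_sqrt hQ.le
  set s := √(b * c - a ^ 2)
  refine ⟨⟨⟨a / b, s / b⟩, div_pos hs hb⟩, ?_, ?_, ?_⟩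
  · change (a / b) / (s / b) = _
    field_simp
  · change 1 / (s / b) = _
    field_simp
  · change ((a / b) ^ 2 + (s / b) ^ 2) / (s / b) = _
    field_simp
    linarith

lemma double_sum {ι : Type*} [Fintype ι] (w a b c : ι → ℝ) :
    (∑ i, w i * b i) * (∑ i, w i * c i) - (∑ i, w i * a i) ^ 2 =
      ∑ i, ∑ j, w i * w j * ((b i * c j + b j * c i) / 2 - a i * a j) := by
  have h1 : (∑ i, w i * b i) * (∑ i, w i * c i) = ∑ i, ∑ j, w i * w j * (b i * c j) := by
    rw [Finset.sum_mul_sum]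
    exact Finset.sum_congr rfl fun i _ => Finset.sum_congr rfl fun j _ => by ring
  have h2 : (∑ i, w i * b i) * (∑ i, w i * c i) = ∑ i, ∑ j, w i * w j * (b j * c i) := by
    rw [mul_comm, Finset.sum_mul_sum]
    exact Finset.sum_congr rfl fun i _ => Finset.sum_congr rfl fun j _ => by ring
  have h3 : (∑ i, w i * a i) ^ 2 = ∑ i, ∑ j, w i * w j * (a i * a j) := by
    rw [sq, Finset.sum_mul_sum]
    exact Finset.sum_congr rfl fun i _ => Finset.sum_congr rfl fun j _ => by ring
  have h4 : ∑ i, ∑ j, w i * w j * ((b i * c j + b j * c i) / 2 - a i * a j) =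
      ((∑ i, ∑ j, w i * w j * (b i * c j)) + ∑ i, ∑ j, w i * w j * (b j * c i)) / 2
        - ∑ i, ∑ j, w i * w j * (a i * a j) := by
    rw [← Finset.sum_add_distrib, Finset.sum_div, ← Finset.sum_sub_distrib]
    refine Finset.sum_congr rfl fun i _ => ?_
    rw [← Finset.sum_add_distrib, Finset.sum_div, ← Finset.sum_sub_distrib]
    exact Finset.sum_congr rfl fun j _ => by ring
  rw [h4, ← h1, ← h2, ← h3]
  ring

lemma variation (Q β ρ : ℝ)
    (h : ∀ s : ℝ, 0 ≤ s → s ≤ 1 → (1 - s) ^ 2 * Q + 2 * s * (1 - s) * β + s ^ 2 * ρ ≤ Q) :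
    β ≤ Q := by
  by_contra! hlt
  have hM : 0 < 2 * β - Q - ρ := by
    have := h 1 zero_le_one le_rfl
    linarith
  have h1 := h 1 zero_le_one le_rfl
  set M := 2 * β - Q - ρ with hMdef
  have hs0 : 0 < (β - Q) / M := div_pos (by linarith) hM
  have hs1 : (β - Q) / M ≤ 1 := by
    rw [div_le_one hM]; linarith
  have h2 := h _ hs0.le hs1
  have hsM : (β - Q) / M * M = β - Q := div_mul_cancel₀ _ hM.ne'
  set s := (β - Q) / M
  have h3 : s * (2 * (β - Q) - s * M) ≤ 0 := by
    rw [hMdef]; linarith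
  rw [hsM] at h3
  have : 0 < s * (2 * (β - Q) - (β - Q)) := mul_pos hs0 (by linarith)
  linarith

lemma kernel_bound {ι : Type*} [Fintype ι] (x : ι → ℍ) (p : ℍ) (w : ι → ℝ)
    (hw1 : ∑ i, w i = 1) :
    ∑ i, ∑ j, w i * w j * (Real.cosh (dist (x i) (x j)) /
      (Real.cosh (dist p (x i)) * Real.cosh (dist p (x j)))) ≤ 1 := by
  set K : ι → ℝ := fun i => Real.cosh (dist p (x i)) with hK
  have hKpos : ∀ i, 0 < K i := fun i => Real.cosh_pos _
  have key := double_sum w (fun i => ca (x i) / K i) (fun i => cb (x i) / K i)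
    (fun i => cc (x i) / K i)
  have e : ∑ i, ∑ j, w i * w j * (Real.cosh (dist (x i) (x j)) / (K i * K j)) =
      ∑ i, ∑ j, w i * w j * ((cb (x i) / K i * (cc (x j) / K j) +
        cb (x j) / K j * (cc (x i) / K i)) / 2 - ca (x i) / K i * (ca (x j) / K j)) := by
    refine Finset.sum_congr rfl fun i _ => Finset.sum_congr rfl fun j _ => ?_
    have := hKpos i
    have := hKpos j
    rw [cosh_form]
    field_simp
  rw [e, ← key]
  set a := ∑ i, w i * (ca (x i) / K i)
  set b := ∑ i, w i * (cb (x i) / K i)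
  set c := ∑ i, w i * (cc (x i) / K i)
  have hp : (cb p * c + b * cc p) / 2 - ca p * a = 1 := by
    rw [← hw1]
    simp only [a, b, c, Finset.mul_sum, Finset.sum_mul]
    rw [← Finset.sum_add_distrib, Finset.sum_div, ← Finset.sum_sub_distrib]
    refine Finset.sum_congr rfl fun i _ => ?_
    have h := hKpos i
    have h2 : K i = _ := cosh_form p (x i)
    have h3 : w i = w i * (((cb p * cc (x i) + cb (x i) * cc p) / 2 - ca p * ca (x i)) / K i) := by
      rw [← h2, div_self h.ne', mul_one]
    refine Eq.trans ?_ h3.symm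
    ring
  have hs := form_self p
  have hb := cb_pos p
  -- reverse Cauchy-Schwarz
  have hc : c = (2 * (1 + ca p * a) - b * cc p) / cb p := by
    field_simp; linarith
  have hcc : cc p = (1 + ca p ^ 2) / cb p := by
    field_simp; linarith
  rw [hc, hcc]
  have : 1 - (b * ((2 * (1 + ca p * a) - b * ((1 + ca p ^ 2) / cb p)) / cb p) - a ^ 2) =
      (b / cb p - 1) ^ 2 + (a - b / cb p * ca p) ^ 2 := by
    field_simp; ring
  nlinarith [sq_nonneg (b / cb p - 1), sq_nonneg (a - b / cb p * ca p)]

lemma kernel_bound_rpow {ι : Type*} [Fintype ι] (x : ι → ℍ) (p : ℍ) (w : ι → ℝ)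
    (hw0 : ∀ i, 0 ≤ w i) (hw1 : ∑ i, w i = 1) (t : ℝ) (ht0 : 0 ≤ t) (ht1 : t ≤ 1) :
    ∑ i, ∑ j, w i * w j * (Real.cosh (dist (x i) (x j)) /
      (Real.cosh (dist p (x i)) * Real.cosh (dist p (x j)))) ^ t ≤ 1 := by
  set M : ι × ι → ℝ := fun ij => Real.cosh (dist (x ij.1) (x ij.2)) /
      (Real.cosh (dist p (x ij.1)) * Real.cosh (dist p (x ij.2))) with hM
  have hMpos : ∀ ij, 0 ≤ M ij := fun ij => by
    have := Real.cosh_pos (dist (x ij.1) (x ij.2))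
    have := Real.cosh_pos (dist p (x ij.1))
    have := Real.cosh_pos (dist p (x ij.2))
    simp only [hM]; positivity
  have hb := kernel_bound x p w hw1
  have hb' : ∑ ij : ι × ι, w ij.1 * w ij.2 * M ij ≤ 1 := by
    rw [Fintype.sum_prod_type]; exact hb
  have hW : ∑ ij : ι × ι, w ij.1 * w ij.2 = 1 := by
    rw [Fintype.sum_prod_type]
    simp only [← Finset.mul_sum, hw1, mul_one]
  have hJ := (Real.concaveOn_rpow ht0 ht1).le_map_sum (t := Finset.univ)
    (w := fun ij : ι × ι => w ij.1 * w ij.2) (p := M)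
    (fun i _ => mul_nonneg (hw0 _) (hw0 _)) hW (fun i _ => hMpos i)
  simp only [smul_eq_mul] at hJ
  have hfin : (∑ ij : ι × ι, w ij.1 * w ij.2 * M ij) ^ t ≤ 1 :=
    Real.rpow_le_one (Finset.sum_nonneg fun i _ =>
      mul_nonneg (mul_nonneg (hw0 _) (hw0 _)) (hMpos _)) hb' ht0
  have := hJ.trans hfin
  rw [Fintype.sum_prod_type] at this
  exact this

lemma finite_ext {ι : Type*} [Fintype ι] [Nonempty ι] (x y : ι → ℍ) (p : ℍ)
    (t : ℝ) (ht0 : 0 ≤ t) (ht1 : t ≤ 1)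
    (h : ∀ i j, Real.cosh (dist (y i) (y j)) ≤ Real.cosh (dist (x i) (x j)) ^ t) :
    ∃ q : ℍ, ∀ i, Real.cosh (dist q (y i)) ≤ Real.cosh (dist p (x i)) ^ t := by
  classical
  set k : ι → ℝ := fun i => Real.cosh (dist p (x i)) ^ t with hk
  have hkpos : ∀ i, 0 < k i := fun i => Real.rpow_pos_of_pos (Real.cosh_pos _) _
  set a : ι → ℝ := fun i => ca (y i) / k i with ha
  set b : ι → ℝ := fun i => cb (y i) / k i with hb
  set c : ι → ℝ := fun i => cc (y i) / k i with hc
  have hbpos : ∀ i, 0 < b i := fun i => div_pos (cb_pos _) (hkpos i)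
  have hself : ∀ i, 0 < b i * c i - a i ^ 2 := fun i => by
    have h1 : b i * c i - a i ^ 2 = (cb (y i) * cc (y i) - ca (y i) ^ 2) / k i ^ 2 := by
      have := hkpos i
      simp only [ha, hb, hc]; field_simp
    rw [h1, form_self]
    have := hkpos i
    positivity
  set Q : (ι → ℝ) → ℝ := fun w =>
    (∑ i, w i * b i) * (∑ i, w i * c i) - (∑ i, w i * a i) ^ 2 with hQ
  have hQc : Continuous Q := by
    simp only [hQ]; fun_prop
  obtain ⟨i0⟩ := ‹Nonempty ι›
  obtain ⟨w, hw, hmax⟩ := (isCompact_stdSimplex ℝ ι).exists_isMaxOn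
    ⟨_, single_mem_stdSimplex ℝ i0⟩ hQc.continuousOn
  have hsingle : ∀ (i : ι) (g : ι → ℝ), ∑ j, (Pi.single i (1 : ℝ) : ι → ℝ) j * g j = g i := by
    intro i g
    simp [Pi.single_apply]
  have hQpos : 0 < Q w := by
    refine lt_of_lt_of_le (hself i0) ?_
    have := hmax (single_mem_stdSimplex ℝ i0)
    simp only [Set.mem_ofPred_eq, hQ, hsingle] at this
    exact this
  have hQ1 : Q w ≤ 1 := by
    refine le_trans ?_ (kernel_bound_rpow x p w hw.1 hw.2 t ht0 ht1)
    simp only [hQ]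
    rw [double_sum]
    refine Finset.sum_le_sum fun i _ => Finset.sum_le_sum fun j _ => ?_
    refine mul_le_mul_of_nonneg_left ?_ (mul_nonneg (hw.1 i) (hw.1 j))
    have h1 := hkpos i
    have h2 := hkpos j
    have e : (b i * c j + b j * c i) / 2 - a i * a j =
        Real.cosh (dist (y i) (y j)) / (k i * k j) := by
      rw [cosh_form]
      simp only [ha, hb, hc]; field_simp
    rw [e, Real.div_rpow (Real.cosh_pos _).le
      (mul_nonneg (Real.cosh_pos _).le (Real.cosh_pos _).le),
      Real.mul_rpow (Real.cosh_pos _).le (Real.cosh_pos _).le]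
    exact div_le_div_of_nonneg_right (h i j) (mul_pos h1 h2).le
  have hSb : 0 < ∑ i, w i * b i := by
    have hne : ∃ i, 0 < w i := by
      by_contra! hcon
      have : ∑ i, w i ≤ 0 := Finset.sum_nonpos fun i _ => hcon i
      rw [hw.2] at this
      linarith
    obtain ⟨i, hi⟩ := hne
    exact Finset.sum_pos' (fun j _ => mul_nonneg (hw.1 j) (hbpos j).le)
      ⟨i, Finset.mem_univ _, mul_pos hi (hbpos i)⟩
  obtain ⟨q, hqa, hqb, hqc⟩ := exists_point (∑ i, w i * a i) (∑ i, w i * b i)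
    (∑ i, w i * c i) hSb hQpos
  refine ⟨q, fun i => ?_⟩
  have hvar : ((∑ i, w i * b i) * c i + b i * (∑ i, w i * c i)) / 2 -
      (∑ i, w i * a i) * a i ≤ Q w := by
    refine variation _ _ (b i * c i - a i ^ 2) fun s hs0 hs1 => ?_
    have hmem : (1 - s) • w + s • (Pi.single i (1 : ℝ) : ι → ℝ) ∈ stdSimplex ℝ ι :=
      convex_stdSimplex ℝ ι hw (single_mem_stdSimplex ℝ i) (by linarith) hs0 (by ring)
    have hle := hmax hmem
    have hlin : ∀ g : ι → ℝ, ∑ j, ((1 - s) • w + s • (Pi.single i (1 : ℝ) : ι → ℝ)) j * g j =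
        (1 - s) * ∑ j, w j * g j + s * g i := by
      intro g
      rw [← hsingle i g, Finset.mul_sum, Finset.mul_sum, ← Finset.sum_add_distrib]
      refine Finset.sum_congr rfl fun j _ => ?_
      simp only [Pi.add_apply, Pi.smul_apply, smul_eq_mul]
      ring
    simp only [Set.mem_ofPred_eq, hQ, hlin] at hle
    simp only [hQ]
    refine le_trans (le_of_eq ?_) hle
    ring
  have hk1 := hkpos i
  have hs := Real.sqrt_pos.2 hQpos
  have hs2 := Real.sq_sqrt hQpos.le
  have hs1 : √(Q w) ≤ 1 := Real.sqrt_le_one.2 hQ1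
  change Real.cosh (dist q (y i)) ≤ k i
  rw [cosh_form, hqa, hqb, hqc]
  change (_ / √(Q w) * _ + _ * (_ / √(Q w))) / 2 - _ / √(Q w) * _ ≤ _
  have e : ((∑ i, w i * b i) / √(Q w) * cc (y i) + cb (y i) * ((∑ i, w i * c i) / √(Q w))) / 2 -
      (∑ i, w i * a i) / √(Q w) * ca (y i) =
      k i * ((((∑ i, w i * b i) * c i + b i * (∑ i, w i * c i)) / 2 -
      (∑ i, w i * a i) * a i) / √(Q w)) := by
    have e1 : ca (y i) = k i * a i := by simp only [ha]; field_simp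
    have e2 : cb (y i) = k i * b i := by simp only [hb]; field_simp
    have e3 : cc (y i) = k i * c i := by simp only [hc]; field_simp
    rw [e1, e2, e3]
    ring
  rw [e]
  have : (((∑ i, w i * b i) * c i + b i * (∑ i, w i * c i)) / 2 -
      (∑ i, w i * a i) * a i) / √(Q w) ≤ 1 := by
    rw [div_le_one hs]
    nlinarith
  nlinarith

lemma one_point (S : Set (ℍ × ℍ)) (t : ℝ) (ht0 : 0 ≤ t) (ht1 : t ≤ 1)
    (h : ∀ u ∈ S, ∀ v ∈ S, Real.cosh (dist u.2 v.2) ≤ Real.cosh (dist u.1 v.1) ^ t) (p : ℍ) :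
    ∃ q : ℍ, ∀ u ∈ S, Real.cosh (dist q u.2) ≤ Real.cosh (dist p u.1) ^ t := by
  classical
  rcases S.eq_empty_or_nonempty with rfl | ⟨u0, hu0⟩
  · exact ⟨p, by simp⟩
  set T : S → Set ℍ := fun u => {q | Real.cosh (dist q u.1.2) ≤ Real.cosh (dist p u.1.1) ^ t}
    with hT
  have hclosed : ∀ u, IsClosed (T u) := fun u =>
    isClosed_le (Real.continuous_cosh.comp (continuous_id.dist continuous_const)) continuous_const
  have hcomp : IsCompact (T ⟨u0, hu0⟩) := by
    refine (isCompact_closedBall u0.2 (dist p u0.1)).of_isClosed_subset (hclosed _) ?_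
    intro q hq
    have hq : Real.cosh (dist q u0.2) ≤ Real.cosh (dist p u0.1) ^ t := hq
    have h2 : Real.cosh (dist p u0.1) ^ t ≤ Real.cosh (dist p u0.1) := by
      conv_rhs => rw [← Real.rpow_one (Real.cosh (dist p u0.1))]
      exact Real.rpow_le_rpow_of_exponent_le (Real.one_le_cosh _) ht1
    have h3 := Real.cosh_le_cosh.1 (hq.trans h2)
    rwa [abs_of_nonneg dist_nonneg, abs_of_nonneg dist_nonneg] at h3
  obtain ⟨q, -, hq⟩ := hcomp.inter_iInter_nonempty T hclosed (by
    intro F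
    let F' : Finset S := insert ⟨u0, hu0⟩ F
    have : Nonempty F' := ⟨⟨⟨u0, hu0⟩, Finset.mem_insert_self _ _⟩⟩
    obtain ⟨q, hq⟩ := finite_ext (fun i : F' => i.1.1.1) (fun i : F' => i.1.1.2) p t ht0 ht1
      (fun i j => h _ i.1.2 _ j.1.2)
    refine ⟨q, hq ⟨_, Finset.mem_insert_self _ _⟩, ?_⟩
    simp only [Set.mem_iInter]
    exact fun u hu => hq ⟨u, Finset.mem_insert_of_mem hu⟩)
  refine ⟨q, fun u hu => ?_⟩
  exact Set.mem_iInter.1 hq ⟨u, hu⟩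

lemma cosh_mul_le (t : ℝ) (ht0 : 0 ≤ t) (ht1 : t ≤ 1) (d : ℝ) :
    Real.cosh (t * d) ≤ Real.cosh d ^ t := by
  have hc := Real.concaveOn_rpow ht0 ht1
  have hJ := hc.2 (Set.mem_Ici.2 (Real.exp_pos d).le) (Set.mem_Ici.2 (Real.exp_pos (-d)).le)
    (by norm_num : (0 : ℝ) ≤ 1 / 2) (by norm_num : (0 : ℝ) ≤ 1 / 2) (by norm_num)
  simp only [smul_eq_mul, ← Real.exp_mul] at hJ
  rw [Real.cosh_eq, Real.cosh_eq]
  have e1 : (Real.exp (t * d) + Real.exp (-(t * d))) / 2 =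
      1 / 2 * Real.exp (d * t) + 1 / 2 * Real.exp (-d * t) := by
    rw [show -d * t = -(t * d) by ring, mul_comm d t]; ring
  have e2 : (Real.exp d + Real.exp (-d)) / 2 = 1 / 2 * Real.exp d + 1 / 2 * Real.exp (-d) := by
    ring
  rw [e1, e2]
  exact hJ

lemma sinh_cosh_ineq (s : ℝ) (hs0 : 0 ≤ s) (hs1 : s ≤ 1) (x : ℝ) (hx : 0 ≤ x) :
    0 ≤ Real.sinh (s * x) * Real.cosh x - s * (Real.sinh x * Real.cosh (s * x)) := by
  have hd : ∀ x : ℝ, HasDerivAt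
      (fun x => Real.sinh (s * x) * Real.cosh x - s * (Real.sinh x * Real.cosh (s * x)))
      ((1 - s ^ 2) * (Real.sinh (s * x) * Real.sinh x)) x := by
    intro x
    have hl : HasDerivAt (fun x : ℝ => s * x) s x := by
      simpa using (hasDerivAt_id x).const_mul s
    have := (hl.sinh.mul (Real.hasDerivAt_cosh x)).sub
      (((Real.hasDerivAt_sinh x).mul hl.cosh).const_mul s)
    refine this.congr_deriv ?_
    ring
  have hmono : MonotoneOn
      (fun x => Real.sinh (s * x) * Real.cosh x - s * (Real.sinh x * Real.cosh (s * x)))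
      (Set.Ici 0) := by
    refine monotoneOn_of_deriv_nonneg (convex_Ici 0)
      (fun x _ => (hd x).continuousAt.continuousWithinAt)
      (fun x _ => (hd x).differentiableAt.differentiableWithinAt) ?_
    intro x hx
    rw [interior_Ici] at hx
    have hx : 0 < x := hx
    rw [(hd x).deriv]
    have h1 : 0 ≤ Real.sinh (s * x) := Real.sinh_nonneg_iff.2 (mul_nonneg hs0 hx.le)
    have h2 : 0 ≤ Real.sinh x := Real.sinh_nonneg_iff.2 hx.le
    have h3 : 0 ≤ 1 - s ^ 2 := by nlinarith
    positivity
  have := hmono (Set.self_mem_Ici) hx hx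
  simpa using this

lemma cosh_rpow_le (s : ℝ) (hs0 : 0 ≤ s) (hs1 : s ≤ 1) (x : ℝ) (hx : 0 ≤ x) :
    Real.cosh x ^ (s ^ 2) ≤ Real.cosh (s * x) := by
  have hd : ∀ x : ℝ, HasDerivAt
      (fun x => Real.log (Real.cosh (s * x)) - s ^ 2 * Real.log (Real.cosh x))
      (Real.sinh (s * x) * s / Real.cosh (s * x) - s ^ 2 * (Real.sinh x / Real.cosh x)) x := by
    intro x
    have hl : HasDerivAt (fun x : ℝ => s * x) s x := by
      simpa using (hasDerivAt_id x).const_mul s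
    have := (hl.cosh.log (Real.cosh_pos _).ne').sub
      (((Real.hasDerivAt_cosh x).log (Real.cosh_pos _).ne').const_mul (s ^ 2))
    exact this
  have hmono : MonotoneOn
      (fun x => Real.log (Real.cosh (s * x)) - s ^ 2 * Real.log (Real.cosh x))
      (Set.Ici 0) := by
    refine monotoneOn_of_deriv_nonneg (convex_Ici 0)
      (fun x _ => (hd x).continuousAt.continuousWithinAt)
      (fun x _ => (hd x).differentiableAt.differentiableWithinAt) ?_
    intro x hx
    rw [interior_Ici] at hx
    have hx : 0 < x := hx
    rw [(hd x).deriv]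
    have h1 := sinh_cosh_ineq s hs0 hs1 x hx.le
    have h2 := Real.cosh_pos x
    have h3 := Real.cosh_pos (s * x)
    have e : Real.sinh (s * x) * s / Real.cosh (s * x) - s ^ 2 * (Real.sinh x / Real.cosh x) =
      s * (Real.sinh (s * x) * Real.cosh x - s * (Real.sinh x * Real.cosh (s * x))) /
        (Real.cosh (s * x) * Real.cosh x) := by
      field_simp
    rw [e]
    positivity
  have := hmono (Set.self_mem_Ici) hx hx
  simp only [mul_zero, Real.cosh_zero, Real.log_one, sub_zero] at this
  rw [← Real.log_le_log_iff (Real.rpow_pos_of_pos (Real.cosh_pos _) _) (Real.cosh_pos _),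
    Real.log_rpow (Real.cosh_pos _)]
  linarith

end HypExt

open HypExt

theorem stmt_15 (C : ℝ) (hC0 : 0 ≤ C) (hC1 : C < 1) :
    ∃ C' : ℝ, C ≤ C' ∧ C' < 1 ∧
      ∀ (X' : Set ℍ) (f : X' → ℍ),
        (∀ x y : X', dist (f x) (f y) ≤ C * dist (x : ℍ) (y : ℍ)) →
        ∃ F : ℍ → ℍ, (∀ x y : ℍ, dist (F x) (F y) ≤ C' * dist x y) ∧
          ∀ x : X', F x = f x := by
  have hs0 := Real.sqrt_nonneg C
  have hs2 := Real.sq_sqrt hC0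
  have hs1 : √C < 1 := by
    rw [Real.sqrt_lt' one_pos]; simpa using hC1
  refine ⟨√C, by nlinarith, hs1, fun X' f hf => ?_⟩
  let P : Set (Set (ℍ × ℍ)) := {S | ∀ u ∈ S, ∀ v ∈ S,
    Real.cosh (dist u.2 v.2) ≤ Real.cosh (dist u.1 v.1) ^ C}
  let S0 : Set (ℍ × ℍ) := Set.range fun x : X' => ((x : ℍ), f x)
  have hS0 : S0 ∈ P := by
    rintro _ ⟨x, rfl⟩ _ ⟨y, rfl⟩
    refine le_trans ?_ (cosh_mul_le C hC0 hC1.le _)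
    rw [Real.cosh_le_cosh, abs_of_nonneg dist_nonneg,
      abs_of_nonneg (mul_nonneg hC0 dist_nonneg)]
    exact hf x y
  obtain ⟨S, hS0S, hSmax⟩ := zorn_subset_nonempty P (by
    intro c hc hchain _
    refine ⟨⋃₀ c, ?_, fun s hs => Set.subset_sUnion_of_mem hs⟩
    rintro u ⟨A, hA, huA⟩ v ⟨B, hB, hvB⟩
    rcases hchain.total hA hB with hAB | hAB
    · exact hc hB u (hAB huA) v hvB
    · exact hc hA u huA v (hAB hvB)) S0 hS0
  have hSP : S ∈ P := hSmax.prop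
  have htot : ∀ p : ℍ, ∃ q : ℍ, (p, q) ∈ S := by
    intro p
    obtain ⟨q, hq⟩ := one_point S C hC0 hC1.le hSP p
    refine ⟨q, ?_⟩
    have hins : insert (p, q) S ∈ P := by
      rintro u (rfl | hu) v (rfl | hv)
      · simp
      · exact hq v hv
      · rw [dist_comm u.2, dist_comm u.1]; exact hq u hu
      · exact hSP u hu v hv
    exact hSmax.le_of_ge hins (Set.subset_insert _ _) (Set.mem_insert _ _)
  choose F hF using htot
  have main : ∀ u ∈ S, ∀ v ∈ S, dist u.2 v.2 ≤ √C * dist u.1 v.1 := by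
    intro u hu v hv
    have h1 := hSP u hu v hv
    have h2 := cosh_rpow_le (√C) hs0 hs1.le (dist u.1 v.1) dist_nonneg
    rw [hs2] at h2
    have h3 := Real.cosh_le_cosh.1 (h1.trans h2)
    rwa [abs_of_nonneg dist_nonneg, abs_of_nonneg (mul_nonneg hs0 dist_nonneg)] at h3
  refine ⟨F, fun x y => main _ (hF x) _ (hF y), fun x => ?_⟩
  have := main _ (hF x) _ (hS0S ⟨x, rfl⟩)
  simp only [dist_self, mul_zero] at this
  exact dist_le_zero.1 this
end

section
/- For every real C with 0 ≤ C < 1 and every positive integer m there exists a real C' with C ≤ C' < 1 such that: for every subset X' of the Euclidean space ℝ^m and every C-Lipschitz map f : X' → ℍ into the hyperbolic plane, there exists a C'-Lipschitz map F : ℝ^m → ℍ with F(x) = f(x) for all x ∈ X'. The constant C' depends only on C and m. -/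
open scoped UpperHalfPlane

lemma pow_majorize (A B P Q : ℝ) (hB : 0 ≤ B) (hQ : 0 ≤ Q) (hBA : B ≤ A)
    (hAP : A ≤ P) (h : A + B ≤ P + Q) (n : ℕ) : A ^ n + B ^ n ≤ P ^ n + Q ^ n := by
  have hA : 0 ≤ A := hB.trans hBA
  rcases le_or_gt B Q with hBQ | hBQ
  · have h1 := pow_le_pow_left₀ hA hAP n
    have h2 := pow_le_pow_left₀ hB hBQ n
    linarith
  · induction n with
    | zero => simp
    | succ n ih =>
      have h2 := pow_le_pow_left₀ hQ hBQ.le n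
      have h3 := pow_le_pow_left₀ hQ (hBQ.le.trans hBA) n
      have h4 : 0 ≤ Q ^ n := pow_nonneg hQ n
      have e1 : B * (B ^ n - Q ^ n) ≤ P * (P ^ n - A ^ n) :=
        mul_le_mul (hBA.trans hAP) (by linarith) (by linarith) (by linarith)
      have e2 : (B - Q) * Q ^ n ≤ (P - A) * A ^ n :=
        mul_le_mul (by linarith) h3 h4 (by linarith)
      simp only [pow_succ]
      nlinarith

lemma cosh_majorize_aux (a b p q : ℝ) (hb : 0 ≤ b) (hba : b ≤ a) (hap : a ≤ p)
    (h : Real.cosh a + Real.cosh b = Real.cosh p + Real.cosh q) :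
    p ^ 2 + q ^ 2 ≤ a ^ 2 + b ^ 2 := by
  by_contra! hlt
  have h1 := (Real.hasSum_cosh a).add (Real.hasSum_cosh b)
  have h2 := (Real.hasSum_cosh p).add (Real.hasSum_cosh q)
  have := hasSum_lt (i := 1) (fun n => ?_) ?_ h1 h2
  · linarith
  · have := pow_majorize (a ^ 2) (b ^ 2) (p ^ 2) (q ^ 2) (by positivity) (by positivity)
      (by gcongr) (by gcongr; linarith) hlt.le n
    simp only [pow_mul, ← add_div]
    gcongr
  · norm_num
    linarith

lemma cosh_majorize (a b p q : ℝ) (ha : 0 ≤ a) (hb : 0 ≤ b) (hap : a ≤ p) (hbp : b ≤ p)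
    (h : Real.cosh a + Real.cosh b = Real.cosh p + Real.cosh q) :
    p ^ 2 + q ^ 2 ≤ a ^ 2 + b ^ 2 := by
  rcases le_total a b with hab | hab
  · have := cosh_majorize_aux b a p q ha hab hbp (by linarith)
    linarith
  · exact cosh_majorize_aux a b p q hb hab hap h

lemma exists_mid_cosh (p q : ℍ) : ∃ c : ℍ, ∀ z : ℍ,
    2 * Real.cosh (dist p q / 2) * Real.cosh (dist z c)
      = Real.cosh (dist z p) + Real.cosh (dist z q) := by
  set N := 2 * Real.cosh (dist p q / 2) with hN
  have hNpos : 0 < N := by have := Real.cosh_pos (dist p q / 2); positivity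
  have hp := p.im_pos
  have hq := q.im_pos
  have hN2 : N ^ 2 = 2 + 2 * Real.cosh (dist p q) := by
    have h1 := Real.cosh_two_mul (dist p q / 2)
    have h2 := Real.cosh_sq (dist p q / 2)
    rw [show 2 * (dist p q / 2) = dist p q by ring] at h1
    rw [hN, h1, mul_pow]; linarith
  rw [UpperHalfPlane.cosh_dist'] at hN2
  have hN3 : N ^ 2 * (p.im * q.im) = (p.re - q.re) ^ 2 + (p.im + q.im) ^ 2 := by
    rw [hN2]; field_simp; ring
  refine ⟨⟨⟨(p.re * q.im + q.re * p.im) / (p.im + q.im), N * (p.im * q.im) / (p.im + q.im)⟩,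
    by positivity⟩, fun z => ?_⟩
  have hz := z.im_pos
  simp only [UpperHalfPlane.cosh_dist']
  simp only [UpperHalfPlane.re, UpperHalfPlane.im] at *
  generalize (p : ℂ).re = p1 at *
  generalize (q : ℂ).re = q1 at *
  generalize (z : ℂ).re = z1 at *
  generalize (p : ℂ).im = p2 at *
  generalize (q : ℂ).im = q2 at *
  generalize (z : ℂ).im = z2 at *
  clear_value N
  have hne : p2 + q2 ≠ 0 := by positivity
  field_simp
  linear_combination (p2 * q2) * hN3

lemma exists_mid (p q : ℍ) : ∃ c : ℍ, dist p c = dist p q / 2 ∧ ∀ z : ℍ,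
    dist z c ^ 2 ≤ dist z p ^ 2 / 2 + dist z q ^ 2 / 2 - dist p q ^ 2 / 4 := by
  obtain ⟨c, hc⟩ := exists_mid_cosh p q
  have hpos := Real.cosh_pos (dist p q / 2)
  have hd : ∀ x : ℍ, Real.cosh (dist x p) + Real.cosh (dist x q) = 1 + Real.cosh (dist p q) →
      dist x c = dist p q / 2 := by
    intro x hx
    have h0 := hc x
    rw [hx] at h0
    have h1 := Real.cosh_two_mul (dist p q / 2)
    have h2 := Real.cosh_sq (dist p q / 2)
    rw [show 2 * (dist p q / 2) = dist p q by ring] at h1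
    have h3 : Real.cosh (dist x c) = Real.cosh (dist p q / 2) := by
      have : 2 * Real.cosh (dist p q / 2) * Real.cosh (dist x c) =
        2 * Real.cosh (dist p q / 2) * Real.cosh (dist p q / 2) := by nlinarith
      exact mul_left_cancel₀ (by positivity) this
    have h4 := (Real.cosh_le_cosh.1 h3.le)
    have h5 := (Real.cosh_le_cosh.1 h3.ge)
    rw [abs_of_nonneg dist_nonneg, abs_of_nonneg (by positivity)] at h4 h5
    linarith
  have hp : dist p c = dist p q / 2 := hd p (by simp)
  have hq : dist q c = dist p q / 2 := hd q (by simp [dist_comm q p, add_comm])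
  refine ⟨c, hp, fun z => ?_⟩
  have := cosh_majorize (dist z p) (dist z q) (dist z c + dist p q / 2) (dist z c - dist p q / 2)
    dist_nonneg dist_nonneg
    (by have := dist_triangle z c p; rw [dist_comm c p, hp] at this; exact this)
    (by have := dist_triangle z c q; rw [dist_comm c q, hq] at this; exact this)
    (by rw [← hc z, Real.cosh_add, Real.cosh_sub]; ring)
  nlinarith

lemma exists_geod (p q : ℍ) (k : ℕ) : ∃ c : ℍ, dist p c = (1 / 2 : ℝ) ^ k * dist p q ∧ ∀ z : ℍ,
    dist c z ^ 2 ≤ (1 - (1 / 2 : ℝ) ^ k) * dist p z ^ 2 + (1 / 2 : ℝ) ^ k * dist q z ^ 2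
      - (1 / 2 : ℝ) ^ k * (1 - (1 / 2 : ℝ) ^ k) * dist p q ^ 2 := by
  induction k with
  | zero => exact ⟨q, by simp, by simp⟩
  | succ k ih =>
    obtain ⟨c, h1, h2⟩ := ih
    obtain ⟨d, h3, h4⟩ := exists_mid p c
    refine ⟨d, by rw [h3, h1, pow_succ]; ring, fun z => ?_⟩
    have := h4 z
    have h5 := h2 z
    rw [h1, dist_comm z d, dist_comm z p, dist_comm z c] at this
    rw [pow_succ (1 / 2 : ℝ) k]
    generalize (1 / 2 : ℝ) ^ k = t at *
    nlinarith

lemma posPart_sq_le (e x : ℝ) : (max (e + x) 0) ^ 2 ≤ (max e 0) ^ 2 + 2 * max e 0 * x + x ^ 2 := by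
  rcases le_total (e + x) 0 with h | h <;> rcases le_total e 0 with h' | h' <;>
    simp only [max_eq_left, max_eq_right, h, h'] <;> nlinarith [sq_nonneg (e + x)]

lemma finite_inter {ι E : Type*} [NormedAddCommGroup E] [InnerProductSpace ℝ E] (s : Finset ι)
    (u : ι → E) (y : ι → ℍ)
    (h : ∀ i ∈ s, ∀ j ∈ s, dist (y i) (y j) ≤ ‖u i - u j‖) :
    ∃ c : ℍ, ∀ i ∈ s, dist c (y i) ≤ ‖u i‖ := by
  classical
  rcases s.eq_empty_or_nonempty with rfl | ⟨i0, hi0⟩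
  · exact ⟨UpperHalfPlane.I, by simp⟩
  let g : ι → ℍ → ℝ := fun i c => dist c (y i) ^ 2 - ‖u i‖ ^ 2
  let Φ : ℍ → ℝ := fun c => ∑ i ∈ s, (max (g i c) 0) ^ 2
  have hΦc : Continuous Φ := by fun_prop
  -- existence of a minimiser
  obtain ⟨c, hc⟩ : ∃ c, ∀ z, Φ c ≤ Φ z := by
    apply hΦc.exists_forall_le
    have hle : ∀ z, g i0 z ^ 1 - 1 ≤ Φ z := fun z => by
      have h1 : (max (g i0 z) 0) ^ 2 ≤ Φ z :=
        Finset.single_le_sum (f := fun i => (max (g i z) 0) ^ 2) (fun i _ => by positivity) hi0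
      have h2 := le_max_left (g i0 z) 0
      nlinarith [sq_nonneg (max (g i0 z) 0 - 1)]
    refine Filter.tendsto_atTop_mono hle ?_
    simp only [pow_one, g]
    have ht := tendsto_dist_right_cocompact_atTop (y i0)
    have := (Filter.tendsto_pow_atTop (α := ℝ) (n := 2) (by norm_num)).comp ht
    simp only [sub_eq_add_neg]
    exact Filter.tendsto_atTop_add_const_right _ _
      (Filter.tendsto_atTop_add_const_right _ _ this)
  let a : ι → ℝ := fun i => max (g i c) 0
  have ha : ∀ i, 0 ≤ a i := fun i => le_max_right _ _
  have hvar : ∀ z, 0 ≤ ∑ i ∈ s, a i * (dist z (y i) ^ 2 - dist c (y i) ^ 2 - dist c z ^ 2) := by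
    intro z
    let η : ι → ℝ → ℝ := fun i t =>
      dist z (y i) ^ 2 - dist c (y i) ^ 2 - (1 - t) * dist c z ^ 2
    have key : ∀ k : ℕ, 0 ≤ ∑ i ∈ s, (2 * a i * η i ((1/2 : ℝ) ^ k) +
        (1/2 : ℝ) ^ k * η i ((1/2 : ℝ) ^ k) ^ 2) := by
      intro k
      obtain ⟨w, -, hw⟩ := exists_geod c z k
      have htp : 0 < (1/2 : ℝ) ^ k := by positivity
      generalize (1/2 : ℝ) ^ k = t at *
      have h1 : Φ w ≤ ∑ i ∈ s, ((a i) ^ 2 + 2 * a i * (t * η i t) + (t * η i t) ^ 2) := by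
        refine Finset.sum_le_sum fun i _ => ?_
        refine le_trans ?_ (posPart_sq_le (g i c) (t * η i t))
        gcongr
        have := hw (y i)
        simp only [g, η]
        linarith
      have h2 := (hc w).trans h1
      have h3 : ∑ i ∈ s, ((a i) ^ 2 + 2 * a i * (t * η i t) + (t * η i t) ^ 2) =
          Φ c + t * ∑ i ∈ s, (2 * a i * η i t + t * η i t ^ 2) := by
        simp only [Φ, Finset.mul_sum, ← Finset.sum_add_distrib]
        exact Finset.sum_congr rfl fun i _ => by ring
      rw [h3] at h2
      exact nonneg_of_mul_nonneg_right (by linarith) htp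
    have hcont : Continuous fun t : ℝ => ∑ i ∈ s, (2 * a i * η i t + t * η i t ^ 2) := by
      fun_prop
    have hlim := (hcont.tendsto 0).comp
      (tendsto_pow_atTop_nhds_zero_of_lt_one (r := (1/2 : ℝ)) (by norm_num) (by norm_num))
    have h0 := ge_of_tendsto' hlim key
    have h1 : ∑ i ∈ s, (2 * a i * η i 0 + 0 * η i 0 ^ 2) =
        2 * ∑ i ∈ s, a i * (dist z (y i) ^ 2 - dist c (y i) ^ 2 - dist c z ^ 2) := by
      rw [Finset.mul_sum]
      exact Finset.sum_congr rfl fun i _ => by simp only [η]; ring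
    rw [h1] at h0
    linarith
  -- sum up
  have hsum : 0 ≤ ∑ j ∈ s, a j * ∑ i ∈ s, a i *
      (dist (y j) (y i) ^ 2 - dist c (y i) ^ 2 - dist c (y j) ^ 2) :=
    Finset.sum_nonneg fun j _ => mul_nonneg (ha j) (hvar _)
  have hle : ∑ j ∈ s, a j * ∑ i ∈ s, a i *
      (dist (y j) (y i) ^ 2 - dist c (y i) ^ 2 - dist c (y j) ^ 2) ≤
      ∑ j ∈ s, ∑ i ∈ s, (-2 * (inner ℝ (a j • u j) (a i • u i)) - a j * (a i * a i)
        - a i * (a j * a j)) := by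
    refine Finset.sum_le_sum fun j hj => ?_
    rw [Finset.mul_sum]
    refine Finset.sum_le_sum fun i hi => ?_
    have h1 : dist (y j) (y i) ^ 2 ≤ ‖u j‖ ^ 2 - 2 * inner ℝ (u j) (u i) + ‖u i‖ ^ 2 := by
      rw [← norm_sub_sq_real]
      gcongr
      exact h j hj i hi
    have h2 : ∀ i, a i * (‖u i‖ ^ 2 - dist c (y i) ^ 2) = - (a i * a i) := by
      intro i
      have : a i * g i c = a i * a i := by
        simp only [a]
        rcases le_total (g i c) 0 with h | h <;> simp [h]
      simp only [g] at this
      linarith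
    rw [real_inner_smul_left, real_inner_smul_right]
    have h3 := mul_le_mul_of_nonneg_left h1 (mul_nonneg (ha j) (ha i))
    have h4 := congrArg (fun r => a j * r) (h2 i)
    have h5 := congrArg (fun r => a i * r) (h2 j)
    linarith
  have heq : ∑ j ∈ s, ∑ i ∈ s, (-2 * (inner ℝ (a j • u j) (a i • u i)) - a j * (a i * a i)
        - a i * (a j * a j)) = -2 * ‖∑ i ∈ s, a i • u i‖ ^ 2
        - 2 * ((∑ i ∈ s, a i) * ∑ i ∈ s, a i * a i) := by
    simp only [Finset.sum_sub_distrib, ← Finset.mul_sum, ← Finset.sum_mul]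
    rw [← real_inner_self_eq_norm_sq, sum_inner]
    simp only [inner_sum]
    ring
  have hle0 : (∑ i ∈ s, a i) * ∑ i ∈ s, a i * a i ≤ 0 := by
    nlinarith [sq_nonneg ‖∑ i ∈ s, a i • u i‖]
  refine ⟨c, fun i hi => ?_⟩
  by_contra! hlt
  have hpos : 0 < a i := by
    refine lt_max_of_lt_left ?_
    simp only [g]
    have := norm_nonneg (u i)
    nlinarith
  have hp1 : 0 < ∑ i ∈ s, a i := Finset.sum_pos' (fun i _ => ha i) ⟨i, hi, hpos⟩
  have hp2 : 0 < ∑ i ∈ s, a i * a i :=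
    Finset.sum_pos' (fun i _ => mul_self_nonneg _) ⟨i, hi, mul_pos hpos hpos⟩
  nlinarith [mul_pos hp1 hp2]

lemma one_point {E : Type*} [NormedAddCommGroup E] [InnerProductSpace ℝ E] (C : ℝ) (hC : 0 ≤ C)
    (G : Set (E × ℍ)) (hG : ∀ p ∈ G, ∀ q ∈ G, dist p.2 q.2 ≤ C * dist p.1 q.1) (x : E) :
    ∃ c : ℍ, ∀ p ∈ G, dist c p.2 ≤ C * dist x p.1 := by
  classical
  rcases G.eq_empty_or_nonempty with rfl | ⟨p0, hp0⟩
  · exact ⟨UpperHalfPlane.I, by simp⟩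
  have hn : ∀ p : E × ℍ, ‖C • (p.1 - x)‖ = C * dist x p.1 := fun p => by
    rw [norm_smul, Real.norm_of_nonneg hC, dist_comm, dist_eq_norm]
  have := (isCompact_closedBall p0.2 (C * dist x p0.1)).inter_iInter_nonempty
    (fun p : G => Metric.closedBall p.1.2 (C * dist x p.1.1))
    (fun p => Metric.isClosed_closedBall) (fun t => by
      obtain ⟨c, hc⟩ := finite_inter (insert ⟨p0, hp0⟩ t) (fun p : G => C • (p.1.1 - x))
        (fun p : G => p.1.2) (fun i _ j _ => by
          refine (hG i i.2 j j.2).trans ?_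
          rw [← smul_sub, sub_sub_sub_cancel_right, norm_smul, Real.norm_of_nonneg hC,
            dist_eq_norm])
      simp only [hn] at hc
      refine ⟨c, ?_, ?_⟩
      · exact hc ⟨p0, hp0⟩ (Finset.mem_insert_self _ _)
      · simp only [Set.mem_iInter]
        exact fun i hi => hc i (Finset.mem_insert_of_mem hi))
  obtain ⟨c, -, hc⟩ := this
  simp only [Set.mem_iInter] at hc
  exact ⟨c, fun p hp => hc ⟨p, hp⟩⟩

theorem stmt_16 (C : ℝ) (hC0 : 0 ≤ C) (hC1 : C < 1) (m : ℕ) (hm : 0 < m) :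
    ∃ C' : ℝ, C ≤ C' ∧ C' < 1 ∧
      ∀ (X' : Set (EuclideanSpace ℝ (Fin m))) (f : X' → ℍ),
        (∀ x y : X', dist (f x) (f y) ≤
          C * dist (x : EuclideanSpace ℝ (Fin m)) (y : EuclideanSpace ℝ (Fin m))) →
        ∃ F : EuclideanSpace ℝ (Fin m) → ℍ,
          (∀ x y : EuclideanSpace ℝ (Fin m), dist (F x) (F y) ≤ C' * dist x y) ∧
          ∀ x : X', F x = f x := by
  refine ⟨C, le_rfl, hC1, fun X' f hf => ?_⟩
  let S : Set (Set (EuclideanSpace ℝ (Fin m) × ℍ)) :=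
    {G | ∀ p ∈ G, ∀ q ∈ G, dist p.2 q.2 ≤ C * dist p.1 q.1}
  let G0 : Set (EuclideanSpace ℝ (Fin m) × ℍ) := Set.range fun x : X' => ((x : _), f x)
  have hG0 : G0 ∈ S := by
    rintro _ ⟨x, rfl⟩ _ ⟨y, rfl⟩
    exact hf x y
  obtain ⟨M, hsub, hM⟩ := zorn_subset_nonempty S (fun c hcS hc _ => by
    refine ⟨⋃₀ c, ?_, fun s hs => Set.subset_sUnion_of_mem hs⟩
    rintro p ⟨s, hs, hp⟩ q ⟨t, ht, hq⟩
    rcases hc.total hs ht with h | h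
    · exact hcS ht p (h hp) q hq
    · exact hcS hs p hp q (h hq)) G0 hG0
  have hMS : M ∈ S := hM.prop
  have hex : ∀ x, ∃ c, (x, c) ∈ M := by
    intro x
    obtain ⟨c, hc⟩ := one_point C hC0 M hMS x
    refine ⟨c, ?_⟩
    have hins : insert (x, c) M ∈ S := by
      rintro p (rfl | hp) q (rfl | hq)
      · simp
      · exact hc q hq
      · rw [dist_comm, dist_comm p.1]; exact hc p hp
      · exact hMS p hp q hq
    exact hM.le_of_ge hins (Set.subset_insert _ _) (Set.mem_insert _ _)
  choose F hF using hex
  refine ⟨F, fun x y => hMS _ (hF x) _ (hF y), fun x => ?_⟩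
  have := hMS _ (hF x) _ (hsub ⟨x, rfl⟩)
  simp only [dist_self, mul_zero] at this
  exact dist_le_zero.1 this
end
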